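/- arXiv:2602.05790 — 4 statements merged into one kernel-verified Lean document; each statement's English description precedes it below -/
import Mathlib

section
/- Fix constants R*, ε, η, α > 0, and set β = 0 if α < 1/4, otherwise fix any constant β > α − 1/4. There exist n₀ = n₀(ε, η, R*, α) and a constant c = c(ε, η, R*, α) such that for every n ≥ n₀ there are a rate R ≤ R* + ε, an encoder f : ℝⁿ × 𝕊₊ⁿ × [0,1] → {1,…,⌊2^{nR}⌋}, a decoder g : {1,…,⌊2^{nR}⌋} × [0,1] → ℝⁿ, and a random variable S ∈ [0,1] such that for every pair (W, Σ) admissible with parameter α (Σ = UΛUᵀ, λ the diagonal of Λ), setting Ŵ = g(f(W, Σ, S), S): Pr_S[(1/n) d_Σ(W, Ŵ) ≤ 𝐃_rc^λ(UᵀW, R*) + n^{2β} η] ≥ 1 − exp(−2^{nε(1 − c n^{4(α−β)−1})}). -/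
open MeasureTheory Matrix Real

/-- Distortion `d_Σ(w, v) = (w - v)ᵀ Σ (w - v)`. -/
noncomputable def dSig {n : ℕ} (Sig : Matrix (Fin n) (Fin n) ℝ) (w v : Fin n → ℝ) : ℝ :=
  (w - v) ⬝ᵥ Sig.mulVec (w - v)

/-- Random-coding rate `R_rc(λ, T) = (1/(2n)) Σᵢ log₂(1 + λᵢ T)`. -/
noncomputable def Rrc {n : ℕ} (lam : Fin n → ℝ) (T : ℝ) : ℝ :=
  (1 / (2 * (n : ℝ))) * ∑ i, Real.logb 2 (1 + lam i * T)

/-- `T_rc(λ, R)`: the unique `T > 0` with `R_rc(λ, T) = R`. -/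
noncomputable def Trc {n : ℕ} (lam : Fin n → ℝ) (R : ℝ) : ℝ :=
  Classical.epsilon fun T => 0 < T ∧ Rrc lam T = R

/-- General random-coding distortion `D_rc^λ(V, T) = (1/n) Σᵢ Vᵢ² λᵢ/(1 + λᵢ T)`. -/
noncomputable def DrcV {n : ℕ} (lam V : Fin n → ℝ) (T : ℝ) : ℝ :=
  (1 / (n : ℝ)) * ∑ i, (V i) ^ 2 * lam i / (1 + lam i * T)

/-- `𝐃_rc^λ(V, R) = D_rc^λ(V, T_rc(λ, R))`. -/
noncomputable def DDrcV {n : ℕ} (lam V : Fin n → ℝ) (R : ℝ) : ℝ :=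
  DrcV lam V (Trc lam R)

open ProbabilityTheory in
lemma tilt_bound {Ω : Type*} [MeasurableSpace Ω] (P : Measure Ω) [IsProbabilityMeasure P]
    (d : Ω → ℝ) (hd : Measurable d) (hd0 : ∀ ω, 0 ≤ d ω) (s b m v κ : ℝ) (hs : 0 < s) (hb : 0 < b)
    (hK : cgf d P (-s) = κ) (hm : deriv (cgf d P) (-s) = m)
    (hv : iteratedDeriv 2 (cgf d P) (-s) = v) (hvb : v ≤ b ^ 2 / 2) :
    (1 / 2) * exp (κ + s * m - 2 * s * v / b) ≤ P.real {ω | d ω ≤ m + b} := by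
  have hsub : Set.Iic (0:ℝ) ⊆ integrableExpSet d P := by
    intro t ht
    have ht : t ≤ 0 := ht
    refine Integrable.of_bound (C := 1) (by fun_prop) (Filter.Eventually.of_forall fun ω => ?_)
    rw [Real.norm_eq_abs, abs_of_pos (exp_pos _), exp_le_one_iff]
    exact mul_nonpos_of_nonpos_of_nonneg ht (hd0 ω)
  have hmemInt : -s ∈ interior (integrableExpSet d P) := by
    apply interior_mono hsub
    rw [interior_Iic]
    simpa using hs
  have hI : Integrable (fun ω => exp (-s * d ω)) P := hsub (by simp [hs.le])
  set Q := P.tilted (-s * d ·) with hQ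
  have hprob : IsProbabilityMeasure Q := isProbabilityMeasure_tilted hI
  have hmemQ : MemLp d 2 Q := memLp_tilted_mul hmemInt 2
  have hEm : ∫ ω, d ω ∂Q = m := by rw [← hm]; exact integral_tilted_mul_self hmemInt
  have hEv : ∫ ω, (d ω - m) ^ 2 ∂Q = v := by
    rw [← hv, ← variance_tilted_mul hmemInt, variance_eq_integral hd.aemeasurable, hEm]
  have hv0 : 0 ≤ v := by rw [← hEv]; positivity
  have hA : MeasurableSet {ω | d ω ≤ m + b} := measurableSet_le hd measurable_const
  have hPA : P.real {ω | d ω ≤ m + b} =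
      ∫ ω, ({ω | d ω ≤ m + b}.indicator (fun ω => exp (s * d ω + κ)) ω) ∂Q := by
    rw [integral_tilted_mul_eq_cgf _ hI, ← integral_indicator_one hA]
    congr with ω
    simp only [Set.indicator]
    split_ifs
    · rw [hK, smul_eq_mul, ← exp_add]; simp
    · simp
  set u := 2 * s * v / b with hu
  have hu0 : 0 ≤ u := by positivity
  set a := κ + s * m - u with ha
  have hi1 : Integrable (fun ω => d ω - m) Q := (hmemQ.integrable (by norm_num)).sub (integrable_const _)
  have hi2 : Integrable (fun ω => (d ω - m) ^ 2) Q := (hmemQ.sub (memLp_const m)).integrable_sq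
  have hl : ∫ ω, exp a * ((1 + u) + s * (d ω - m) - ((1 + u) / b ^ 2 + s / b) * (d ω - m) ^ 2) ∂Q
      = exp a * ((1 + u) - ((1 + u) / b ^ 2 + s / b) * v) := by
    rw [integral_const_mul, integral_sub (by fun_prop) (by fun_prop), integral_add (by fun_prop) (by fun_prop),
      integral_const_mul, integral_const_mul, hEv, integral_sub (hmemQ.integrable (by norm_num)) (by fun_prop), hEm]
    simp
  have hAm : Integrable ({ω | d ω ≤ m + b}.indicator (fun ω => exp (s * d ω + κ))) Q := by
    refine Integrable.of_bound (C := exp (s * (m + b) + κ)) ?_ (Filter.Eventually.of_forall fun ω => ?_)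
    · exact (Measurable.indicator (by fun_prop) hA).aestronglyMeasurable
    · simp only [Set.indicator]
      split_ifs with h
      · rw [Real.norm_eq_abs, abs_of_pos (exp_pos _)]
        have : d ω ≤ m + b := h
        gcongr
      · simp [exp_nonneg]
  have hle : ∫ ω, exp a * ((1 + u) + s * (d ω - m) - ((1 + u) / b ^ 2 + s / b) * (d ω - m) ^ 2) ∂Q
      ≤ P.real {ω | d ω ≤ m + b} := by
    rw [hPA]
    refine integral_mono (by fun_prop) hAm fun ω => ?_
    simp only [Set.indicator, Set.mem_ofPred_eq]
    have e1 : ((1 + u) / b ^ 2 + s / b) * (d ω - m) ^ 2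
        = (1 + u) * ((d ω - m) / b) ^ 2 + s * b * ((d ω - m) / b) ^ 2 := by
      field_simp
    have e2 : d ω - m = b * ((d ω - m) / b) := by field_simp
    split_ifs with h
    · have h1 : exp (s * d ω + κ) = exp a * exp (u + s * (d ω - m)) := by
        rw [← exp_add]; congr 1; rw [ha]; ring
      rw [h1]
      gcongr
      have := add_one_le_exp (u + s * (d ω - m))
      have : 0 ≤ ((1 + u) / b ^ 2 + s / b) * (d ω - m) ^ 2 := by positivity
      linarith
    · apply mul_nonpos_of_nonneg_of_nonpos (exp_nonneg _)
      rw [e1]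
      have hy : 1 ≤ (d ω - m) / b := by rw [le_div_iff₀ hb]; push Not at h; linarith
      set y := (d ω - m) / b
      rw [e2]
      have h3 : (1 + u) * 1 ≤ (1 + u) * y ^ 2 := by gcongr; nlinarith
      have h4 : s * b * y ≤ s * b * y ^ 2 := by gcongr; nlinarith
      linarith
  rw [hl] at hle
  refine le_trans ?_ hle
  rw [mul_comm]
  gcongr
  have e3 : ((1 + u) / b ^ 2 + s / b) * v = (1 + u) * (v / b ^ 2) + u / 2 := by
    rw [hu]; field_simp
  rw [e3]
  have : v / b ^ 2 ≤ 1 / 2 := by rw [div_le_iff₀ (by positivity)]; linarith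
  have : (1 + u) * (v / b ^ 2) ≤ (1 + u) * (1 / 2) := by gcongr
  linarith

open ProbabilityTheory in
lemma mgf_one (lam V : ℝ) (v : NNReal) (hv : v ≠ 0) (hl : 0 ≤ lam) (t : ℝ) (ht : t ≤ 0) :
    mgf (fun x => lam * (V - x) ^ 2) (gaussianReal 0 v) t =
      (√(1 - 2 * lam * v * t))⁻¹ * exp (t * lam * V ^ 2 / (1 - 2 * lam * v * t)) := by
  have hv' : (0:ℝ) < v := by positivity
  have hr : 0 < 1 - 2 * lam * v * t := by
    have : 0 ≤ 2 * lam * v * (-t) := by have := neg_nonneg.2 ht; positivity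
    linarith
  unfold mgf
  rw [integral_gaussianReal_eq_integral_smul hv]
  simp only [gaussianPDFReal, smul_eq_mul]
  set r := 1 - 2 * lam * v * t with hrr
  have key : ∀ x : ℝ, (√(2 * π * v))⁻¹ * exp (-(x - 0) ^ 2 / (2 * v)) * exp (t * (lam * (V - x) ^ 2))
      = ((√(2 * π * v))⁻¹ * exp (t * lam * V ^ 2 / r)) * exp (-(r / (2 * v)) * (x + 2 * v * t * lam * V / r) ^ 2) := by
    intro x
    rw [mul_assoc, mul_assoc (√(2 * π * v))⁻¹, ← exp_add, ← exp_add]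
    congr 2
    have : lam * t = (1 - r) / (2 * v) := by rw [hrr]; field_simp; ring
    have h2 : 2 * v * t * lam * V / r = (1 - r) * V / r := by
      rw [hrr]; ring
    rw [h2, mul_comm t lam, ← mul_assoc, mul_comm t lam, this]
    field_simp
    ring
  simp_rw [key]
  rw [integral_const_mul, integral_add_right_eq_self (fun x => exp (-(r / (2 * v)) * x ^ 2)),
    integral_gaussian]
  have : √(π / (r / (2 * v))) = √(2 * π * v) * (√r)⁻¹ := by
    rw [← Real.sqrt_inv, ← Real.sqrt_mul (by positivity)]
    congr 1
    field_simp
  rw [this]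
  have : √(2 * π * v) ≠ 0 := by positivity
  field_simp

noncomputable def phi (lam V v t : ℝ) : ℝ :=
  -(1 / 2) * log (1 - 2 * lam * v * t) + t * lam * V ^ 2 / (1 - 2 * lam * v * t)

open ProbabilityTheory in
lemma cgf_one (lam V : ℝ) (v : NNReal) (hv : v ≠ 0) (hl : 0 ≤ lam) (t : ℝ) (ht : t ≤ 0) :
    cgf (fun x => lam * (V - x) ^ 2) (gaussianReal 0 v) t = phi lam V v t := by
  have hr : 0 < 1 - 2 * lam * v * t := by
    have : 0 ≤ 2 * lam * v * (-t) := by have := neg_nonneg.2 ht; positivity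
    linarith
  rw [cgf, mgf_one _ _ _ hv hl _ ht, log_mul (by positivity) (by positivity), log_exp, log_inv,
    log_sqrt hr.le, phi]
  ring

open ProbabilityTheory in
lemma cgf_pi {n : ℕ} (lam V : Fin n → ℝ) (v : NNReal) (hv : v ≠ 0) (hl : ∀ i, 0 ≤ lam i) (t : ℝ)
    (ht : t ≤ 0) :
    cgf (fun x : Fin n → ℝ => ∑ i, lam i * (V i - x i) ^ 2)
      (Measure.pi fun _ => gaussianReal 0 v) t = ∑ i, phi (lam i) (V i) v t := by
  have hind : iIndepFun (fun i (x : Fin n → ℝ) => lam i * (V i - x i) ^ 2)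
      (Measure.pi fun _ => gaussianReal 0 v) :=
    iIndepFun_pi (μ := fun _ : Fin n => gaussianReal 0 v) (X := fun i x => lam i * (V i - x) ^ 2) 
      (fun i => by fun_prop)
  have h := hind.cgf_sum (t := t) (fun i => by fun_prop) (s := Finset.univ) (by
    intro i _
    refine Integrable.of_bound (C := 1) (Measurable.aestronglyMeasurable (by fun_prop)) (Filter.Eventually.of_forall fun ω => ?_)
    rw [Real.norm_eq_abs, abs_of_pos (exp_pos _), exp_le_one_iff]
    exact mul_nonpos_of_nonpos_of_nonneg ht (by have := hl i; positivity))
  have e : (fun x : Fin n → ℝ => ∑ i, lam i * (V i - x i) ^ 2)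
    = ∑ i, fun (x : Fin n → ℝ) => lam i * (V i - x i) ^ 2 := by ext; simp
  rw [e, h]
  refine Finset.sum_congr rfl fun i _ => ?_
  rw [← cgf_one _ _ _ hv (hl i) t ht]
  unfold cgf mgf
  congr 1
  have hmp := measurePreserving_eval (fun _ : Fin n => gaussianReal 0 v) i
  have := hmp.map_eq
  conv_rhs => rw [← hmp.map_eq]
  rw [integral_map (measurable_pi_apply i).aemeasurable (by fun_prop)]

lemma phi_deriv (lam V v t : ℝ) (hr : 0 < 1 - 2 * lam * v * t) :
    HasDerivAt (phi lam V v) (lam * v / (1 - 2 * lam * v * t) +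
      lam * V ^ 2 / (1 - 2 * lam * v * t) ^ 2) t := by
  have h1 : HasDerivAt (fun t => 1 - 2 * lam * v * t) (-(2 * lam * v)) t := by
    simpa using ((hasDerivAt_id t).const_mul (2 * lam * v)).const_sub 1
  have h2 := (h1.log hr.ne').const_mul (-(1 / 2))
  have h3 := (((hasDerivAt_id t).mul_const lam).mul_const (V ^ 2)).div h1 hr.ne'
  refine (h2.add h3).congr_deriv ?_
  simp only [id]
  field_simp
  ring

lemma phi_deriv2 (lam V v t : ℝ) (hr : 0 < 1 - 2 * lam * v * t) :
    HasDerivAt (fun t => lam * v / (1 - 2 * lam * v * t) +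
      lam * V ^ 2 / (1 - 2 * lam * v * t) ^ 2) (2 * lam ^ 2 * v ^ 2 / (1 - 2 * lam * v * t) ^ 2
        + 4 * lam ^ 2 * v * V ^ 2 / (1 - 2 * lam * v * t) ^ 3) t := by
  have h1 : HasDerivAt (fun t => 1 - 2 * lam * v * t) (-(2 * lam * v)) t := by
    simpa using ((hasDerivAt_id t).const_mul (2 * lam * v)).const_sub 1
  have h2 := (hasDerivAt_const t (lam * v)).div h1 hr.ne'
  have h3 := (hasDerivAt_const t (lam * V ^ 2)).div (h1.pow 2) (by simp only [Pi.pow_apply]; positivity)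
  refine (h2.add h3).congr_deriv ?_
  simp only [Pi.pow_apply]
  field_simp
  ring


open ProbabilityTheory in
lemma gauss_bound {n : ℕ} (lam V : Fin n → ℝ) (v : NNReal) (hv : v ≠ 0) (hl : ∀ i, 0 ≤ lam i)
    (T b : ℝ) (hT : 0 < T) (hb : 0 < b)
    (hσ : T * ∑ i, V i ^ 2 * lam i ^ 2 / (1 + lam i * T) ^ 2 ≤ v * ∑ i, lam i / (1 + lam i * T))
    (hvar : ∑ i, (2 * lam i ^ 2 * v ^ 2 / (1 + lam i * T) ^ 2
        + 4 * lam i ^ 2 * v * V i ^ 2 / (1 + lam i * T) ^ 3) ≤ b ^ 2 / 2) :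
    (1 / 2) * exp (-(1 / 2) * ∑ i, log (1 + lam i * T) - T / v *
      (∑ i, (2 * lam i ^ 2 * v ^ 2 / (1 + lam i * T) ^ 2
        + 4 * lam i ^ 2 * v * V i ^ 2 / (1 + lam i * T) ^ 3)) / b) ≤
    (Measure.pi fun _ : Fin n => gaussianReal 0 v).real
      {x | ∑ i, lam i * (V i - x i) ^ 2 ≤
        ∑ i, (lam i * v / (1 + lam i * T) + lam i * V i ^ 2 / (1 + lam i * T) ^ 2) + b} := by
  have hv' : (0:ℝ) < v := by positivity
  set s := T / (2 * v) with hs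
  have hs0 : 0 < s := by positivity
  have hpos : ∀ i, 0 < 1 + lam i * T := fun i => by have := hl i; positivity
  have h1 : ∀ i, 1 - 2 * lam i * v * (-s) = 1 + lam i * T := fun i => by
    rw [hs]; field_simp; ring
  have hpos' : ∀ i, ∀ t ∈ Set.Iio (0:ℝ), 0 < 1 - 2 * lam i * v * t := fun i t ht => by
    have : 0 ≤ 2 * lam i * v * (-t) := by
      have h := neg_nonneg.2 (le_of_lt (Set.mem_Iio.1 ht)); have := hl i; positivity
    linarith
  have hmem : Set.Iio (0:ℝ) ∈ nhds (-s) := Iio_mem_nhds (by linarith)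
  set d : (Fin n → ℝ) → ℝ := fun x => ∑ i, lam i * (V i - x i) ^ 2 with hd
  set P := Measure.pi fun _ : Fin n => gaussianReal 0 v with hP
  have hc : ∀ t ∈ Set.Iio (0:ℝ), cgf d P t = ∑ i, phi (lam i) (V i) v t := fun t ht =>
    cgf_pi lam V v hv hl t (le_of_lt ht)
  have hd1 : ∀ t ∈ Set.Iio (0:ℝ), deriv (cgf d P) t = ∑ i, (lam i * v / (1 - 2 * lam i * v * t) +
      lam i * V i ^ 2 / (1 - 2 * lam i * v * t) ^ 2) := fun t ht => by
    have he : cgf d P =ᶠ[nhds t] fun t => ∑ i, phi (lam i) (V i) v t :=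
      Filter.eventuallyEq_of_mem (Iio_mem_nhds ht) hc
    rw [he.deriv_eq]
    exact (HasDerivAt.fun_sum fun i _ => phi_deriv _ _ _ _ (hpos' i t ht)).deriv
  have hd2 : iteratedDeriv 2 (cgf d P) (-s) = ∑ i, (2 * lam i ^ 2 * v ^ 2 / (1 + lam i * T) ^ 2
        + 4 * lam i ^ 2 * v * V i ^ 2 / (1 + lam i * T) ^ 3) := by
    rw [iteratedDeriv_succ, iteratedDeriv_one]
    have he : deriv (cgf d P) =ᶠ[nhds (-s)] fun t => ∑ i, (lam i * v / (1 - 2 * lam i * v * t) +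
      lam i * V i ^ 2 / (1 - 2 * lam i * v * t) ^ 2) := Filter.eventuallyEq_of_mem hmem hd1
    rw [he.deriv_eq]
    have := (HasDerivAt.fun_sum (u := Finset.univ) fun i _ => phi_deriv2 (lam i) (V i) v (-s)
      (by rw [h1]; exact hpos i)).deriv
    rw [this]
    simp_rw [h1]
  have hd1' := hd1 (-s) (by simpa using hs0)
  have hc' := hc (-s) (by simpa using hs0)
  simp_rw [h1] at hd1'
  simp only [phi, h1] at hc'
  have main := tilt_bound P d (by fun_prop) (fun x => Finset.sum_nonneg fun i _ => by
    have := hl i; positivity) s b _ _ _ hs0 hb hc' hd1' hd2 hvar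
  refine le_trans ?_ main
  have e1 : T / v = 2 * s := by rw [hs]; field_simp
  rw [e1]
  gcongr
  rw [Finset.sum_add_distrib, Finset.sum_add_distrib, ← Finset.mul_sum]
  have e2 : ∑ i, -s * lam i * V i ^ 2 / (1 + lam i * T) = -s * ∑ i, lam i * V i ^ 2 / (1 + lam i * T) := by
    rw [Finset.mul_sum]; congr with i; ring
  have e3 : ∑ i, lam i * V i ^ 2 / (1 + lam i * T) = ∑ i, lam i * V i ^ 2 / (1 + lam i * T) ^ 2
      + T * ∑ i, V i ^ 2 * lam i ^ 2 / (1 + lam i * T) ^ 2 := by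
    rw [Finset.mul_sum, ← Finset.sum_add_distrib]; congr with i
    have := (hpos i).ne'
    field_simp
  have e4 : ∑ i, lam i * v / (1 + lam i * T) = v * ∑ i, lam i / (1 + lam i * T) := by
    rw [Finset.mul_sum]; congr with i; ring
  have e5 : s * (T * ∑ i, V i ^ 2 * lam i ^ 2 / (1 + lam i * T) ^ 2) ≤
    s * (v * ∑ i, lam i / (1 + lam i * T)) := by gcongr
  rw [e2, e3, e4]
  nlinarith [e5]


open ProbabilityTheory in
lemma charFun_gpi {n : ℕ} (v : NNReal) (t : EuclideanSpace ℝ (Fin n)) :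
    charFun ((Measure.pi fun _ : Fin n => gaussianReal 0 v).map (WithLp.toLp 2)) t =
      Complex.exp (-(v * (t.ofLp ⬝ᵥ t.ofLp : ℝ) / 2)) := by
  rw [charFun_pi]
  simp_rw [charFun_gaussianReal, ← Complex.exp_sum]
  congr 1
  simp only [dotProduct]
  push_cast
  rw [Finset.mul_sum, Finset.sum_div, ← Finset.sum_neg_distrib]
  refine Finset.sum_congr rfl fun i _ => ?_
  simp only [mul_zero, zero_mul, zero_sub]
  ring

open ProbabilityTheory in
lemma map_rot {n : ℕ} (v : NNReal) (U : Matrix (Fin n) (Fin n) ℝ) (hU : U * Uᵀ = 1) :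
    (Measure.pi fun _ : Fin n => gaussianReal 0 v).map (fun x => Uᵀ *ᵥ x) =
      Measure.pi fun _ : Fin n => gaussianReal 0 v := by
  have hU' : Uᵀ * U = 1 := mul_eq_one_comm.1 hU
  have hm : Measurable (fun x : Fin n → ℝ => Uᵀ *ᵥ x) := by fun_prop
  apply (MeasurableEquiv.toLp 2 (Fin n → ℝ)).map_measurableEquiv_injective
  apply Measure.ext_of_charFun (E := EuclideanSpace ℝ (Fin n))
  ext t
  rw [MeasurableEquiv.coe_toLp, charFun_gpi, Measure.map_map (by fun_prop) hm]
  have h2 := charFun_gpi v (WithLp.toLp 2 (U *ᵥ t.ofLp))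
  have e : (U *ᵥ t.ofLp) ⬝ᵥ (U *ᵥ t.ofLp) = t.ofLp ⬝ᵥ t.ofLp := by
    rw [dotProduct_mulVec, vecMul_mulVec, dotProduct_comm, hU', vecMul_one]
  rw [WithLp.ofLp_toLp, e] at h2
  rw [← h2, charFun_apply, charFun_apply, integral_map (by fun_prop) (by fun_prop),
    integral_map (by fun_prop) (by fun_prop)]
  congr with x
  congr 3
  simp only [Function.comp, EuclideanSpace.inner_eq_star_dotProduct, star_trivial]
  rw [dotProduct_mulVec, vecMul_transpose]

lemma dSig_eq {n : ℕ} (W x lam : Fin n → ℝ) (U : Matrix (Fin n) (Fin n) ℝ) :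
    dSig (U * Matrix.diagonal lam * Uᵀ) W x
      = ∑ i, lam i * ((Uᵀ *ᵥ W) i - (Uᵀ *ᵥ x) i) ^ 2 := by
  unfold dSig
  rw [← mulVec_mulVec, ← mulVec_mulVec, dotProduct_mulVec, ← mulVec_transpose, mulVec_sub]
  simp only [dotProduct, mulVec_diagonal, Pi.sub_apply]
  refine Finset.sum_congr rfl fun i _ => ?_
  ring

lemma measurable_dSig {n : ℕ} (Sig : Matrix (Fin n) (Fin n) ℝ) (W : Fin n → ℝ) :
    Measurable (fun x => dSig Sig W x) := by
  unfold dSig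
  simp only [dotProduct, mulVec]
  fun_prop

lemma code_exists {n : ℕ} (M : ℕ) (hM : 0 < M) (ν : Measure (Fin n → ℝ)) [IsProbabilityMeasure ν] :
    ∃ (f : (Fin n → ℝ) → Matrix (Fin n) (Fin n) ℝ → ℝ → Fin M) (g : Fin M → ℝ → (Fin n → ℝ)),
      ∀ (W : Fin n → ℝ) (Sig : Matrix (Fin n) (Fin n) ℝ) (B : ℝ),
        1 - Real.exp (-(M * ν.real {x | dSig Sig W x ≤ B})) ≤
          ((volume.restrict (Set.Icc (0 : ℝ) 1)) {s : ℝ | dSig Sig W (g (f W Sig s) s) ≤ B}).toReal := by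
  obtain ⟨φ, hφ, hmap⟩ := MeasureTheory.Measure.exists_measurable_map_eq
    (Measure.pi fun _ : Fin M => ν)
  have : Nonempty (Fin M) := ⟨⟨0, hM⟩⟩
  let g : Fin M → ℝ → (Fin n → ℝ) := fun m s => φ (Set.projIcc 0 1 zero_le_one s) m
  have hf : ∀ (W : Fin n → ℝ) (Sig : Matrix (Fin n) (Fin n) ℝ) (s : ℝ),
      ∃ m : Fin M, ∀ m', dSig Sig W (g m s) ≤ dSig Sig W (g m' s) := fun W Sig s =>
    Finite.exists_min fun m => dSig Sig W (g m s)
  choose f hf using hf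
  refine ⟨f, g, fun W Sig B => ?_⟩
  set A := {x | dSig Sig W x ≤ B} with hA
  have hAm : MeasurableSet A := measurableSet_le (measurable_dSig Sig W) measurable_const
  have hproj : Measurable (Set.projIcc (0:ℝ) 1 zero_le_one) := continuous_projIcc.measurable
  have hgm : Measurable (fun s m => g m s) := hφ.comp hproj
  have hlaw : (volume.restrict (Set.Icc (0 : ℝ) 1)).map (fun s m => g m s)
      = Measure.pi fun _ : Fin M => ν := by
    rw [← hmap, ← unitInterval.measurePreserving_coe.map_eq, Measure.map_map hgm (by fun_prop)]
    congr 1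
    ext x
    simp [g]
  have hsub : (fun s m => g m s) ⁻¹' (Set.univ.pi fun _ => Aᶜ)ᶜ ⊆
      {s : ℝ | dSig Sig W (g (f W Sig s) s) ≤ B} := by
    intro s hs
    simp only [Set.mem_preimage, Set.mem_compl_iff, Set.mem_pi, not_forall, not_not] at hs
    obtain ⟨m, -, hm⟩ := hs
    exact (hf W Sig s m).trans hm
  have hms : MeasurableSet ((Set.univ.pi fun _ : Fin M => Aᶜ)) :=
    MeasurableSet.univ_pi fun _ => hAm.compl
  have h1 : (volume.restrict (Set.Icc (0 : ℝ) 1)).real 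
      ((fun s m => g m s) ⁻¹' (Set.univ.pi fun _ => Aᶜ)ᶜ) = 1 - (1 - ν.real A) ^ M := by
    rw [← map_measureReal_apply hgm hms.compl, hlaw, probReal_compl_eq_one_sub hms, measureReal_def,
      Measure.pi_pi]
    simp only [ENNReal.toReal_prod, ← measureReal_def, probReal_compl_eq_one_sub hAm]
    simp
  have h2 : (1 - ν.real A) ^ M ≤ exp (-(M * ν.real A)) := by
    have : exp (-(M * ν.real A)) = exp (-ν.real A) ^ M := by rw [← exp_nat_mul]; ring_nf
    rw [this]
    have h3 : ν.real A ≤ 1 := measureReal_le_one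
    exact pow_le_pow_left₀ (by linarith) (one_sub_le_exp_neg _) _
  calc _ ≤ 1 - (1 - ν.real A) ^ M := by linarith
    _ = _ := h1.symm
    _ ≤ _ := measureReal_mono hsub

open ProbabilityTheory in
/-- mixture over variances -/
lemma mix_exists {n : ℕ} (K : ℕ) (hK : 0 < K) (v : Fin K → NNReal) :
    ∃ ν : Measure (Fin n → ℝ), IsProbabilityMeasure ν ∧ ∀ k A,
      (1 / K : ℝ) * (Measure.pi fun _ : Fin n => gaussianReal 0 (v k)).real A ≤ ν.real A := by
  have hK' : (K:ENNReal) ≠ 0 := by exact_mod_cast hK.ne'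
  let ν : Measure (Fin n → ℝ) := ∑ k, (K:ENNReal)⁻¹ • (Measure.pi fun _ : Fin n => gaussianReal 0 (v k))
  have hν : IsProbabilityMeasure ν := by
    constructor
    simp only [ν, Measure.coe_finsetSum, Finset.sum_apply, Measure.smul_apply, measure_univ]
    simp [ENNReal.mul_inv_cancel hK' (ENNReal.natCast_ne_top K)]
  refine ⟨ν, hν, fun k A => ?_⟩
  have : (K:ENNReal)⁻¹ * (Measure.pi fun _ : Fin n => gaussianReal 0 (v k)) A ≤ ν A := by
    simp only [ν, Measure.coe_finsetSum, Finset.sum_apply, Measure.smul_apply, smul_eq_mul]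
    exact Finset.single_le_sum (f := fun k => (K:ENNReal)⁻¹ * (Measure.pi fun _ : Fin n => gaussianReal 0 (v k)) A)
      (fun _ _ => zero_le) (Finset.mem_univ k)
  have := ENNReal.toReal_mono (measure_ne_top _ _) this
  simpa [ENNReal.toReal_mul, measureReal_def] using this

lemma Trc_spec {n : ℕ} (hn : 0 < n) (lam : Fin n → ℝ) (hl : ∀ i, 0 ≤ lam i)
    (hsum : ∑ i, lam i = n) (R : ℝ) (hR : 0 < R) :
    0 < Trc lam R ∧ Rrc lam (Trc lam R) = R := by
  apply Classical.epsilon_spec (p := fun T => 0 < T ∧ Rrc lam T = R)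
  have hn' : (0:ℝ) < n := by exact_mod_cast hn
  obtain ⟨j, hj⟩ : ∃ j, 0 < lam j := by
    by_contra! h
    have : ∑ i, lam i ≤ 0 := Finset.sum_nonpos fun i _ => h i
    linarith
  set T1 := (2:ℝ) ^ (2 * n * R) / lam j with hT1
  have hT1p : 0 < T1 := by positivity
  have hcont : ContinuousOn (Rrc lam) (Set.Icc 0 T1) := by
    unfold Rrc
    refine ContinuousOn.mul continuousOn_const (continuousOn_finsetSum _ fun i _ => ?_)
    unfold Real.logb
    refine ContinuousOn.div_const (ContinuousOn.log (by fun_prop) fun x hx => ?_) _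
    have := mul_nonneg (hl i) hx.1
    linarith
  have h0 : Rrc lam 0 = 0 := by simp [Rrc]
  have h1 : R ≤ Rrc lam T1 := by
    have : 2 * n * R ≤ ∑ i, Real.logb 2 (1 + lam i * T1) := by
      calc 2 * n * R = Real.logb 2 (2 ^ (2 * n * R)) := by rw [Real.logb_rpow (by norm_num) (by norm_num)]
        _ ≤ Real.logb 2 (1 + lam j * T1) := by
          apply Real.logb_le_logb_of_le (by norm_num) (by positivity)
          rw [hT1]; field_simp; linarith
        _ ≤ _ := Finset.single_le_sum (f := fun i => Real.logb 2 (1 + lam i * T1)) (fun i _ => by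
          apply Real.logb_nonneg (by norm_num)
          have := mul_nonneg (hl i) hT1p.le
          linarith) (Finset.mem_univ j)
    unfold Rrc
    rw [one_div, ← div_eq_inv_mul, le_div_iff₀ (by positivity)]
    linarith
  obtain ⟨T, hT, hTR⟩ := intermediate_value_Icc hT1p.le hcont (show R ∈ Set.Icc _ _ from ⟨by linarith, h1⟩)
  refine ⟨T, lt_of_le_of_ne hT.1 ?_, hTR⟩
  rintro rfl
  linarith


open ProbabilityTheory in
lemma level_bound {n : ℕ} (hn : 0 < n) (lam V : Fin n → ℝ) (hl : ∀ i, 0 ≤ lam i)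
    (hsum : ∑ i, lam i = n) (T T0 a q θ : ℝ) (hT0 : 0 < T0) (hT : T0 ≤ T) (hq : 0 < q) (hqa : q ≤ a)
    (hθ : 0 < θ) (hV : ∀ i, V i ^ 2 ≤ a) (K : ℕ) (hK : a / (θ * q) < K)
    (hbig : (2 * (1 + θ) ^ 2 + 4 * (1 + θ)) * a ^ 2 * n / T0 ≤ (n * θ * q) ^ 2 / 2) :
    ∃ k : Fin K, (1 / 2) * exp (-(1 / 2) * ∑ i, log (1 + lam i * T) -
        (2 * (1 + θ) ^ 2 + 4 * (1 + θ)) / θ ^ 2 * (a / q) ^ 2) ≤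
      (Measure.pi fun _ : Fin n => gaussianReal 0 (((k : ℝ) + 1) * (θ * q)).toNNReal).real
        {x | ∑ i, lam i * (V i - x i) ^ 2 ≤
          ∑ i, (V i) ^ 2 * lam i / (1 + lam i * T) + n * (2 * θ * q)} := by
  have hn' : (0:ℝ) < n := by exact_mod_cast hn
  have hTp : 0 < T := by linarith
  have ha : 0 < a := by linarith
  have hpos : ∀ i, 0 < 1 + lam i * T := fun i => by have := hl i; positivity
  set S1 := ∑ i, lam i / (1 + lam i * T) with hS1
  set S2 := ∑ i, V i ^ 2 * lam i ^ 2 / (1 + lam i * T) ^ 2 with hS2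
  have hS2p : 0 ≤ S2 := Finset.sum_nonneg fun i _ => by
    have := hpos i; positivity
  have hS1p : 0 < S1 := by
    obtain ⟨j, hj⟩ : ∃ j, 0 < lam j := by
      by_contra! h
      have : ∑ i, lam i ≤ 0 := Finset.sum_nonpos fun i _ => h i
      linarith
    refine Finset.sum_pos' (fun i _ => div_nonneg (hl i) (hpos i).le) ⟨j, Finset.mem_univ j, ?_⟩
    exact div_pos hj (hpos j)
  have hS1n : S1 ≤ n := by
    rw [← hsum]
    refine Finset.sum_le_sum fun i _ => div_le_self (hl i) ?_
    have := mul_nonneg (hl i) hTp.le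
    linarith
  have hTS : T * S2 ≤ a * S1 := by
    rw [hS1, hS2, Finset.mul_sum, Finset.mul_sum]
    refine Finset.sum_le_sum fun i _ => ?_
    have h1 := hpos i
    have h2 := hl i
    have e : T * (V i ^ 2 * lam i ^ 2 / (1 + lam i * T) ^ 2) =
      V i ^ 2 * ((lam i * T / (1 + lam i * T)) * (lam i / (1 + lam i * T))) := by
      field_simp
    rw [e]
    have h3 : lam i * T / (1 + lam i * T) ≤ 1 := by rw [div_le_one h1]; linarith
    calc _ ≤ a * (1 * (lam i / (1 + lam i * T))) := by
          gcongr
          exact hV i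
      _ = _ := by ring
  set σ0 := T * S2 / S1 with hσ0
  have hσ0p : 0 ≤ σ0 := by positivity
  have hσ0a : σ0 ≤ a := by rw [hσ0, div_le_iff₀ hS1p]; exact hTS
  have hθq : 0 < θ * q := by positivity
  have hkK : ⌊σ0 / (θ * q)⌋₊ < K := by
    have h1 : (⌊σ0 / (θ * q)⌋₊ : ℝ) ≤ σ0 / (θ * q) := Nat.floor_le (by positivity)
    have h2 : σ0 / (θ * q) ≤ a / (θ * q) := by gcongr
    exact_mod_cast (h1.trans h2).trans_lt hK
  refine ⟨⟨⌊σ0 / (θ * q)⌋₊, hkK⟩, ?_⟩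
  set r : ℝ := ((⌊σ0 / (θ * q)⌋₊ : ℝ) + 1) * (θ * q) with hr
  have hrpos : 0 < r := by positivity
  have hr1 : σ0 ≤ r := by
    have := (Nat.lt_floor_add_one (σ0 / (θ * q))).le
    rwa [div_le_iff₀ hθq] at this
  have hr2 : r ≤ σ0 + θ * q := by
    have : (⌊σ0 / (θ * q)⌋₊ : ℝ) ≤ σ0 / (θ * q) := Nat.floor_le (by positivity)
    rw [le_div_iff₀ hθq] at this
    rw [hr, add_mul]; linarith
  have hr3 : θ * q ≤ r := by
    rw [hr]
    have : (0:ℝ) ≤ ⌊σ0 / (θ * q)⌋₊ := by positivity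
    nlinarith
  have hr4 : r ≤ (1 + θ) * a := by
    have : θ * q ≤ θ * a := by gcongr
    linarith
  have hc : ((r.toNNReal : NNReal) : ℝ) = r := Real.coe_toNNReal _ hrpos.le
  set Vr := ∑ i, (2 * lam i ^ 2 * r ^ 2 / (1 + lam i * T) ^ 2
        + 4 * lam i ^ 2 * r * V i ^ 2 / (1 + lam i * T) ^ 3) with hVr
  set C2 := 2 * (1 + θ) ^ 2 + 4 * (1 + θ) with hC2
  have hVr1 : Vr ≤ C2 * a ^ 2 * n / T := by
    have e : C2 * a ^ 2 * n / T = ∑ i, C2 * a ^ 2 * (lam i / T) := by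
      rw [← Finset.mul_sum, ← Finset.sum_div, hsum]; ring
    rw [e]
    refine Finset.sum_le_sum fun i _ => ?_
    have h1 := hpos i
    have h2 := hl i
    have h5 : 1 ≤ 1 + lam i * T := by have := mul_nonneg h2 hTp.le; linarith
    have h3 : lam i ^ 2 / (1 + lam i * T) ^ 2 ≤ lam i / T := by
      rw [div_le_div_iff₀ (by positivity) hTp]
      have : 0 ≤ lam i * T := by positivity
      nlinarith [mul_nonneg h2 this, mul_nonneg h2 (mul_nonneg this this)]
    have h4 : lam i ^ 2 / (1 + lam i * T) ^ 3 ≤ lam i / T := by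
      refine le_trans ?_ h3
      have h7 := pow_le_pow_right₀ h5 (show 2 ≤ 3 by norm_num)
      exact div_le_div_of_nonneg_left (by positivity) (by positivity) h7
    have h6 : 0 ≤ lam i / T := by positivity
    calc _ = 2 * r ^ 2 * (lam i ^ 2 / (1 + lam i * T) ^ 2) + 4 * r * V i ^ 2 * (lam i ^ 2 / (1 + lam i * T) ^ 3) := by
          ring
      _ ≤ 2 * ((1 + θ) * a) ^ 2 * (lam i / T) + 4 * ((1 + θ) * a) * a * (lam i / T) := by
          gcongr
          exact hV i
      _ = _ := by rw [hC2]; ring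
  have hVr0 : 0 ≤ Vr := Finset.sum_nonneg fun i _ => by
    have h1 := hpos i
    positivity
  have hVr2 : Vr ≤ (n * θ * q) ^ 2 / 2 := by
    refine hVr1.trans (le_trans ?_ hbig)
    gcongr
  have main := gauss_bound lam V r.toNNReal (by simpa using hrpos) hl T (n * θ * q) hTp (by positivity)
    (by rw [hc]; rw [hσ0, div_le_iff₀ hS1p] at hr1; exact hr1) (by rw [hc]; exact hVr2)
  rw [hc] at main
  refine (le_trans ?_ main).trans (measureReal_mono ?_)
  · gcongr
    calc T / r * Vr / (n * θ * q) ≤ T / (θ * q) * (C2 * a ^ 2 * n / T) / (n * θ * q) := by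
          gcongr
      _ = _ := by field_simp
  · intro x hx
    simp only [Set.mem_ofPred_eq] at hx ⊢
    refine hx.trans ?_
    rw [Finset.sum_add_distrib]
    have e4 : ∑ i, lam i * r / (1 + lam i * T) = r * S1 := by
      rw [hS1, Finset.mul_sum]; congr with i; ring
    have e3 : ∑ i, V i ^ 2 * lam i / (1 + lam i * T) = ∑ i, lam i * V i ^ 2 / (1 + lam i * T) ^ 2
        + T * S2 := by
      rw [hS2, Finset.mul_sum, ← Finset.sum_add_distrib]; congr with i
      have := (hpos i).ne'
      field_simp
    have e5 : σ0 * S1 = T * S2 := by rw [hσ0]; field_simp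
    have e6 : r * S1 ≤ (σ0 + θ * q) * S1 := by gcongr
    have e7 : θ * q * S1 ≤ θ * q * n := by gcongr
    rw [e4, e3]
    linarith

lemma T_lower {n : ℕ} (hn : 0 < n) (lam : Fin n → ℝ) (hl : ∀ i, 0 ≤ lam i)
    (hsum : ∑ i, lam i = n) (R T : ℝ) (hT : 0 < T) (h : Rrc lam T = R) :
    ∑ i, log (1 + lam i * T) = 2 * n * R * log 2 ∧ 2 * R * log 2 ≤ T := by
  have hn' : (0:ℝ) < n := by exact_mod_cast hn
  have hlog : 0 < log 2 := log_pos (by norm_num)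
  have h1 : ∑ i, log (1 + lam i * T) = 2 * n * R * log 2 := by
    rw [← h, Rrc]
    simp only [logb]
    rw [← Finset.sum_div]
    have hl2 := hlog.ne'
    generalize ∑ i, log (1 + lam i * T) = S
    field_simp
  refine ⟨h1, ?_⟩
  have h2 : ∑ i, log (1 + lam i * T) ≤ n * T := by
    rw [← hsum, Finset.sum_mul]
    refine Finset.sum_le_sum fun i _ => ?_
    have := hl i
    have := log_le_sub_one_of_pos (show 0 < 1 + lam i * T by positivity)
    linarith
  rw [h1] at h2
  have : n * (2 * R * log 2) ≤ n * T := by linarith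
  exact le_of_mul_le_mul_left this hn'

lemma Drc_nonneg {n : ℕ} (lam V : Fin n → ℝ) (T : ℝ) (hT : 0 < T) (hl : ∀ i, 0 ≤ lam i) :
    0 ≤ DrcV lam V T := by
  unfold DrcV
  refine mul_nonneg (by positivity) (Finset.sum_nonneg fun i _ => ?_)
  have := hl i
  positivity

lemma sq_V {n : ℕ} (α : ℝ) (V : Fin n → ℝ) (h : ‖V‖ ≤ (n : ℝ) ^ α) (i : Fin n) :
    V i ^ 2 ≤ (n : ℝ) ^ (2 * α) := by
  have h1 : |V i| ≤ (n : ℝ) ^ α := by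
    rw [← Real.norm_eq_abs]; exact (norm_le_pi_norm V i).trans h
  rw [mul_comm, Real.rpow_mul (by positivity), ← sq_abs]
  simp only [Real.rpow_ofNat]
  gcongr

/-- achievability of the random-coding rate-distortion for a fixed
(non-random) admissible `W`. The sup norm `‖·‖` on `Fin n → ℝ` is `‖·‖∞`. -/
theorem stmt_4 (Rstar ε η α β : ℝ) (hRstar : 0 < Rstar) (hε : 0 < ε) (hη : 0 < η)
    (hα : 0 < α) (hβ : (α < 1 / 4 ∧ β = 0) ∨ (1 / 4 ≤ α ∧ α - 1 / 4 < β)) :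
    ∃ (n₀ : ℕ) (c : ℝ), 0 < c ∧ ∀ n : ℕ, n₀ ≤ n →
      ∃ (R : ℝ) (f : (Fin n → ℝ) → Matrix (Fin n) (Fin n) ℝ → ℝ →
            Fin ⌊(2 : ℝ) ^ ((n : ℝ) * R)⌋₊)
        (g : Fin ⌊(2 : ℝ) ^ ((n : ℝ) * R)⌋₊ → ℝ → (Fin n → ℝ)),
        R ≤ Rstar + ε ∧
        ∀ (W : Fin n → ℝ) (Sig U : Matrix (Fin n) (Fin n) ℝ) (lam : Fin n → ℝ),
          U * Uᵀ = 1 → Sig = U * Matrix.diagonal lam * Uᵀ →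
          (∀ i, 0 ≤ lam i) → (∑ i, lam i) = (n : ℝ) →
          ‖Uᵀ.mulVec W‖ ≤ (n : ℝ) ^ α →
          1 - Real.exp (-(2 : ℝ) ^ ((n : ℝ) * ε * (1 - c * (n : ℝ) ^ (4 * (α - β) - 1)))) ≤
            ((volume.restrict (Set.Icc (0 : ℝ) 1))
              {s : ℝ |
                (1 / (n : ℝ)) * dSig Sig W (g (f W Sig s) s)
                  ≤ DDrcV lam (Uᵀ.mulVec W) Rstar + (n : ℝ) ^ (2 * β) * η}).toReal := by
  have hlog : 0 < log 2 := log_pos (by norm_num)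
  rcases lt_or_ge α β with hab | hab
  · -- trivial case : the slack already dominates
    have hlim : Filter.Tendsto (fun n : ℕ => (n : ℝ) ^ (2 * (β - α))) Filter.atTop Filter.atTop :=
      (tendsto_rpow_atTop (by linarith)).comp tendsto_natCast_atTop_atTop
    obtain ⟨n₁, hn₁⟩ := Filter.eventually_atTop.1 (hlim.eventually_ge_atTop (1 / η))
    refine ⟨max n₁ 1, 1, one_pos, fun n hn => ?_⟩
    have hn1 : n₁ ≤ n := le_trans (le_max_left _ _) hn
    have hn0 : 0 < n := lt_of_lt_of_le one_pos (le_trans (le_max_right _ _) hn)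
    have hn' : (0:ℝ) < n := by exact_mod_cast hn0
    refine ⟨0, fun _ _ _ => ⟨0, by simp⟩, fun _ _ => 0, by linarith, ?_⟩
    intro W Sig U lam hU hSig hl hsum hW
    obtain ⟨hTp, hTR⟩ := Trc_spec hn0 lam hl hsum Rstar hRstar
    have hall : {s : ℝ | (1 / (n : ℝ)) * dSig Sig W ((fun _ _ => 0 : Fin n → ℝ → Fin n → ℝ) ⟨0, hn0⟩ s)
        ≤ DDrcV lam (Uᵀ.mulVec W) Rstar + (n : ℝ) ^ (2 * β) * η} = Set.univ := by
      refine Set.eq_univ_of_forall fun s => ?_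
      simp only [Set.mem_ofPred_eq]
      rw [hSig, dSig_eq]
      have h1 : ∑ i, lam i * ((Uᵀ *ᵥ W) i - (Uᵀ *ᵥ (0 : Fin n → ℝ)) i) ^ 2 ≤ n * (n : ℝ) ^ (2 * α) := by
        rw [← hsum, Finset.sum_mul, hsum]
        refine Finset.sum_le_sum fun i _ => ?_
        have := sq_V α _ hW i
        have := hl i
        rw [mulVec_zero, Pi.zero_apply, sub_zero]
        gcongr
      have h2 : (n : ℝ) ^ (2 * α) ≤ (n : ℝ) ^ (2 * β) * η := by
        have h3 := hn₁ n hn1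
        have e : (n : ℝ) ^ (2 * β) = (n : ℝ) ^ (2 * (β - α)) * (n : ℝ) ^ (2 * α) := by
          rw [← Real.rpow_add hn']; congr 1; ring
        rw [div_le_iff₀ hη] at h3
        rw [e]
        have : 0 < (n : ℝ) ^ (2 * α) := by positivity
        nlinarith
      have h4 := Drc_nonneg lam (Uᵀ *ᵥ W) _ hTp hl
      have h5 : (1 / (n:ℝ)) * ∑ i, lam i * ((Uᵀ *ᵥ W) i - (Uᵀ *ᵥ (0 : Fin n → ℝ)) i) ^ 2 ≤ (n : ℝ) ^ (2 * α) := by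
        rw [one_div, ← div_eq_inv_mul, div_le_iff₀ hn']; linarith
      unfold DDrcV
      linarith
    have hmeas : (volume.restrict (Set.Icc (0 : ℝ) 1)) Set.univ = 1 := by simp
    refine le_trans ?_ (le_of_eq (congrArg (fun S => ((volume.restrict (Set.Icc (0 : ℝ) 1)) S).toReal) hall).symm)
    simp only [hmeas, ENNReal.toReal_one]
    linarith [exp_pos (-(2 : ℝ) ^ ((n : ℝ) * ε * (1 - 1 * (n : ℝ) ^ (4 * (α - β) - 1))))]
  · have hδ : 0 < 1 - 4 * (α - β) := by
      rcases hβ with ⟨h, rfl⟩ | ⟨h, h'⟩ <;> linarith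
    set θ := η / 2 with hθdef
    have hθ : 0 < θ := by positivity
    set C2 := 2 * (1 + θ) ^ 2 + 4 * (1 + θ) with hC2
    have hC2p : 0 < C2 := by positivity
    set T0 := 2 * Rstar * log 2 with hT0
    have hT0p : 0 < T0 := by positivity
    set C4 := 4 * (1 / θ + 1) with hC4
    have hC4p : 0 < C4 := by positivity
    have hlim : Filter.Tendsto (fun n : ℕ => (n : ℝ) ^ (1 - 4 * (α - β))) Filter.atTop Filter.atTop :=
      (tendsto_rpow_atTop hδ).comp tendsto_natCast_atTop_atTop
    obtain ⟨n₁, hn₁⟩ := Filter.eventually_atTop.1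
      (hlim.eventually_ge_atTop (2 * C2 / (T0 * θ ^ 2)))
    refine ⟨max n₁ 1, (C2 / θ ^ 2 + C4) / (ε * log 2), by positivity, fun n hn => ?_⟩
    have hn1 : n₁ ≤ n := le_trans (le_max_left _ _) hn
    have hn0 : 0 < n := lt_of_lt_of_le one_pos (le_trans (le_max_right _ _) hn)
    have hn' : (0:ℝ) < n := by exact_mod_cast hn0
    have hn1' : (1:ℝ) ≤ n := by exact_mod_cast hn0
    set a := (n : ℝ) ^ (2 * α) with ha
    set q := (n : ℝ) ^ (2 * β) with hq
    have hap : 0 < a := by positivity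
    have hqp : 0 < q := by positivity
    have hqa : q ≤ a := Real.rpow_le_rpow_of_exponent_le hn1' (by linarith)
    set x := (n : ℝ) ^ (4 * (α - β)) with hx
    have hxaq : (a / q) ^ 2 = x := by
      rw [ha, hq, ← Real.rpow_sub hn', ← Real.rpow_natCast, ← Real.rpow_mul hn'.le, hx]
      congr 1; push_cast; ring
    have haq1 : 1 ≤ a / q := by rw [one_le_div hqp]; exact hqa
    have hxle : a / q ≤ x := by rw [← hxaq]; nlinarith
    have hbig : C2 * a ^ 2 * n / T0 ≤ (n * θ * q) ^ 2 / 2 := by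
      have h1 := hn₁ n hn1
      have e1 : (n : ℝ) ^ (1 - 4 * (α - β)) * x = n := by
        rw [hx, ← Real.rpow_add hn']; simp
      rw [div_le_iff₀ (by positivity)] at h1
      have e2 : a ^ 2 = x * q ^ 2 := by rw [← hxaq]; field_simp
      have hxp : 0 < x := by positivity
      rw [div_le_iff₀ hT0p, e2]
      have h2 : 2 * C2 * x ≤ n * (T0 * θ ^ 2) := by
        rw [← e1]
        calc 2 * C2 * x ≤ ((n : ℝ) ^ (1 - 4 * (α - β)) * (T0 * θ ^ 2)) * x := by gcongr
          _ = _ := by ring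
      calc C2 * (x * q ^ 2) * n = (2 * C2 * x) * (q ^ 2 * n / 2) := by ring
        _ ≤ (n * (T0 * θ ^ 2)) * (q ^ 2 * n / 2) := by gcongr
        _ = _ := by ring
    set K := ⌊a / (θ * q)⌋₊ + 1 with hK
    have hKlt : a / (θ * q) < K := by
      have := Nat.lt_floor_add_one (a / (θ * q))
      rw [hK]; push_cast; exact this
    have hKp : (0:ℝ) < K := by rw [hK]; positivity
    have hKle : 4 * (K:ℝ) ≤ exp (C4 * x) := by
      have h1 : (⌊a / (θ * q)⌋₊ : ℝ) ≤ a / (θ * q) := Nat.floor_le (by positivity)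
      have e : a / (θ * q) = (1 / θ) * (a / q) := by field_simp
      have h2 : 4 * (K:ℝ) ≤ C4 * (a / q) := by
        rw [hK, hC4]; push_cast; have h1b := h1.trans_eq e; have h5 : (1:ℝ) ≤ a / q := by rw [le_div_iff₀ (by positivity)]; linarith
        linarith
      have h3 : C4 * (a / q) ≤ C4 * x := by gcongr
      linarith [add_one_le_exp (C4 * x)]
    obtain ⟨ν, hν, hνk⟩ := mix_exists (n := n) K (by omega)
      (fun k => (((k : ℝ) + 1) * (θ * q)).toNNReal)
    have hpow1 : (1:ℝ) ≤ 2 ^ ((n:ℝ) * (Rstar + ε)) :=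
      Real.one_le_rpow (by norm_num) (by positivity)
    have hM : 0 < ⌊(2 : ℝ) ^ ((n : ℝ) * (Rstar + ε))⌋₊ := Nat.floor_pos.2 hpow1
    have hM2 : (2 : ℝ) ^ ((n : ℝ) * (Rstar + ε)) / 2 ≤ ⌊(2 : ℝ) ^ ((n : ℝ) * (Rstar + ε))⌋₊ := by
      have h1 := Nat.lt_floor_add_one ((2 : ℝ) ^ ((n : ℝ) * (Rstar + ε)))
      have h2 : (1:ℝ) ≤ ⌊(2 : ℝ) ^ ((n : ℝ) * (Rstar + ε))⌋₊ := by exact_mod_cast hM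
      linarith
    obtain ⟨f, g, hfg⟩ := code_exists (n := n) _ hM ν
    refine ⟨Rstar + ε, f, g, le_rfl, ?_⟩
    intro W Sig U lam hU hSig hl hsum hW
    obtain ⟨hTp, hTR⟩ := Trc_spec hn0 lam hl hsum Rstar hRstar
    obtain ⟨hlogs, hTl⟩ := T_lower hn0 lam hl hsum Rstar _ hTp hTR
    set T := Trc lam Rstar with hT
    set V := Uᵀ *ᵥ W with hV
    obtain ⟨k, hk⟩ := level_bound hn0 lam V hl hsum T T0 a q θ hT0p hTl hqp hqa hθ
      (fun i => sq_V α V hW i) K hKlt hbig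
    set B := ∑ i, (V i) ^ 2 * lam i / (1 + lam i * T) + n * (2 * θ * q) with hB
    have hset : {s : ℝ | (1 / (n : ℝ)) * dSig Sig W (g (f W Sig s) s)
                  ≤ DDrcV lam V Rstar + q * η} = {s : ℝ | dSig Sig W (g (f W Sig s) s) ≤ B} := by
      ext s
      simp only [Set.mem_ofPred_eq]
      have e : DDrcV lam V Rstar + q * η = B / n := by
        rw [DDrcV, DrcV, ← hT, hB, hθdef]; generalize ∑ i, V i ^ 2 * lam i / (1 + lam i * T) = S0; field_simp
      rw [e, one_div, ← div_eq_inv_mul, div_le_div_iff_of_pos_right hn']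
    rw [hset]
    refine le_trans ?_ (hfg W Sig B)
    have hrot : (Measure.pi fun _ : Fin n => ProbabilityTheory.gaussianReal 0
          (((k : ℝ) + 1) * (θ * q)).toNNReal).real {x | ∑ i, lam i * (V i - x i) ^ 2 ≤ B}
        = (Measure.pi fun _ : Fin n => ProbabilityTheory.gaussianReal 0
          (((k : ℝ) + 1) * (θ * q)).toNNReal).real {x | dSig Sig W x ≤ B} := by
      conv_lhs => rw [← map_rot _ U hU]
      rw [map_measureReal_apply (by fun_prop) (measurableSet_le (by fun_prop) measurable_const)]
      congr 1
      ext y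
      simp only [Set.mem_preimage, Set.mem_ofPred_eq]
      rw [hSig, dSig_eq]
    rw [hrot, hlogs, hxaq] at hk
    have hνB := hνk k {x | dSig Sig W x ≤ B}
    have hfin : (2 : ℝ) ^ ((n : ℝ) * ε * (1 - (C2 / θ ^ 2 + C4) / (ε * log 2) * (n : ℝ) ^ (4 * (α - β) - 1)))
        ≤ ⌊(2 : ℝ) ^ ((n : ℝ) * (Rstar + ε))⌋₊ * ν.real {x | dSig Sig W x ≤ B} := by
      have e1 : (n : ℝ) ^ (4 * (α - β) - 1) = x / n := by
        rw [Real.rpow_sub_one hn'.ne']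
      have e2 : (2 : ℝ) ^ ((n : ℝ) * ε * (1 - (C2 / θ ^ 2 + C4) / (ε * log 2) * (n : ℝ) ^ (4 * (α - β) - 1)))
          = exp (n * ε * log 2 - (C2 / θ ^ 2 + C4) * x) := by
        rw [e1, Real.rpow_def_of_pos (by norm_num)]
        congr 1
        field_simp
      have e3 : (2 : ℝ) ^ ((n : ℝ) * (Rstar + ε)) = exp (n * (Rstar + ε) * log 2) := by
        rw [Real.rpow_def_of_pos (by norm_num)]
        congr 1
        ring
      rw [e2]
      calc exp (n * ε * log 2 - (C2 / θ ^ 2 + C4) * x)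
          = exp (n * (Rstar + ε) * log 2) / 2 * (2 * (1 / exp (C4 * x)) * exp (-(1 / 2) * (2 * n * Rstar * log 2) - C2 / θ ^ 2 * x)) := by
            rw [one_div, ← Real.exp_neg]
            have : ∀ A B C : ℝ, exp A / 2 * (2 * exp B * exp C) = exp (A + B + C) := by
              intro A B C; rw [Real.exp_add, Real.exp_add]; ring
            rw [this]
            congr 1; ring
        _ ≤ exp (n * (Rstar + ε) * log 2) / 2 * (2 * (1 / (4 * K)) * exp (-(1 / 2) * (2 * n * Rstar * log 2) - C2 / θ ^ 2 * x)) := by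
            gcongr
        _ = exp (n * (Rstar + ε) * log 2) / 2 * ((1 / K) * (1 / 2 * exp (-(1 / 2) * (2 * n * Rstar * log 2) - C2 / θ ^ 2 * x))) := by
            field_simp; norm_num
        _ ≤ exp (n * (Rstar + ε) * log 2) / 2 * ν.real {x | dSig Sig W x ≤ B} := by
            gcongr
            refine le_trans ?_ hνB
            gcongr
        _ ≤ _ := by
            rw [← e3]
            gcongr
    have := exp_le_exp.2 (neg_le_neg hfin)
    linarith
end

section
/- Fix constants R*, ε, η > 0 and α ∈ (0, 1/4). Let (W, Σ) be admissible with parameter α (Σ = UΛUᵀ, λ the diagonal of Λ), let τ = τ(W, Σ), and let C = {c₁,…,c_M} with M = ⌊2^{n(R*+ε)}⌋ and c₁,…,c_M i.i.d. N(0, Iₙ). Then there is a constant c = c(ε, η, R*, α) such that for all sufficiently large n: Pr_C[ (1/n) min_{i∈[M]} d_Σ(W, τ cᵢ) ≤ 𝐃_rc^λ(UᵀW, R*) + η ] ≥ 1 − exp(−2^{nε(1 − c n^{4α−1})}). -/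
open MeasureTheory Matrix Real

/-- Standard Gaussian measure `N(0, I_n)` on `ℝⁿ`. -/
noncomputable def stdGaussian (n : ℕ) : Measure (Fin n → ℝ) :=
  Measure.pi fun _ => ProbabilityTheory.gaussianReal 0 1

/-- Law of a codebook of `M` i.i.d. `N(0, I_n)` codewords. -/
noncomputable def codebookMeasure (n M : ℕ) : Measure (Fin M → (Fin n → ℝ)) :=
  Measure.pi fun _ => stdGaussian n

/-- Scaling parameter `τ(W,Σ)`, as a function of `λ`, `W̃ = UᵀW` and `T`:
`τ = (T Σⱼ W̃ⱼ² λⱼ²/(1+λⱼT)²)^{1/2} (Σⱼ λⱼ/(1+λⱼT))^{-1/2}`. -/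
noncomputable def tauDef {n : ℕ} (lam Wt : Fin n → ℝ) (T : ℝ) : ℝ :=
  Real.sqrt (T * ∑ j, (Wt j) ^ 2 * (lam j) ^ 2 / (1 + lam j * T) ^ 2) /
    Real.sqrt (∑ j, lam j / (1 + lam j * T))


lemma aux_rot {n : ℕ} (U : Matrix (Fin n) (Fin n) ℝ) (hU : U * Uᵀ = 1) :
    (Measure.pi fun _ : Fin n => ProbabilityTheory.gaussianReal 0 1).map (fun x => Uᵀ.mulVec x)
      = Measure.pi fun _ : Fin n => ProbabilityTheory.gaussianReal 0 1 := by
  set μ := Measure.pi fun _ : Fin n => ProbabilityTheory.gaussianReal 0 1 with hμ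
  have hlin : Measurable (fun x : Fin n → ℝ => Uᵀ.mulVec x) :=
    (Matrix.mulVecLin Uᵀ).continuous_of_finiteDimensional.measurable
  let f0 : EuclideanSpace ℝ (Fin n) →ₗ[ℝ] EuclideanSpace ℝ (Fin n) := Matrix.toEuclideanLin Uᵀ
  have hnorm : ∀ x, ‖f0 x‖ = ‖x‖ := by
    intro x
    have h : ‖f0 x‖ ^ 2 = ‖x‖ ^ 2 := by
      rw [EuclideanSpace.real_norm_sq_eq, EuclideanSpace.real_norm_sq_eq]
      have h1 : ∑ i, (f0 x) i ^ 2 = (Uᵀ.mulVec x.ofLp) ⬝ᵥ (Uᵀ.mulVec x.ofLp) := by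
        simp [dotProduct, f0, sq, Matrix.toLpLin_apply]
      rw [h1, Matrix.dotProduct_mulVec, Matrix.vecMul_transpose, Matrix.mulVec_mulVec, hU]
      simp [dotProduct, sq]
    exact (sq_eq_sq₀ (norm_nonneg _) (norm_nonneg _)).1 h
  let f : EuclideanSpace ℝ (Fin n) ≃ₗᵢ[ℝ] EuclideanSpace ℝ (Fin n) :=
    LinearIsometry.toLinearIsometryEquiv ⟨f0, hnorm⟩ rfl
  have h1 := ProbabilityTheory.stdGaussian_map f
  rw [← ProbabilityTheory.map_pi_eq_stdGaussian] at h1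
  have h2 : (⇑f ∘ (WithLp.toLp 2 : (Fin n → ℝ) → EuclideanSpace ℝ (Fin n)))
      = (WithLp.toLp 2) ∘ (fun x => Uᵀ.mulVec x) := by
    funext x
    simp [f, f0, Matrix.toLpLin_apply]
  rw [Measure.map_map (by fun_prop) (by fun_prop), h2, ← Measure.map_map (by fun_prop) hlin] at h1
  have e : ∀ ν : Measure (Fin n → ℝ),
      (ν.map (WithLp.toLp 2 : (Fin n → ℝ) → EuclideanSpace ℝ (Fin n))).map WithLp.ofLp = ν := by
    intro ν
    rw [Measure.map_map (by fun_prop) (by fun_prop)]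
    have : (WithLp.ofLp ∘ (WithLp.toLp 2 : (Fin n → ℝ) → EuclideanSpace ℝ (Fin n))) = id := by
      funext x; rfl
    rw [this, Measure.map_id]
  have h3 := congrArg (fun ν => Measure.map (WithLp.ofLp) ν) h1
  simp only at h3
  rwa [e, e] at h3

lemma aux_gauss (a h : ℝ) (ha : 0 ≤ a) :
    ∫ g, Real.exp (-(a * (h - g) ^ 2) / 2) ∂(ProbabilityTheory.gaussianReal 0 1)
      = Real.exp (-(1/2) * Real.log (1 + a) - a * h ^ 2 / (2 * (1 + a))) := by
  rw [ProbabilityTheory.integral_gaussianReal_eq_integral_smul (by norm_num)]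
  simp only [ProbabilityTheory.gaussianPDFReal, smul_eq_mul]
  have h1a : (0:ℝ) < 1 + a := by linarith
  have key : ∀ x : ℝ, (√(2 * π * ((1:NNReal):ℝ)))⁻¹ * rexp (-(x - 0) ^ 2 / (2 * ((1:NNReal):ℝ))) * rexp (-(a * (h - x) ^ 2) / 2)
      = ((√(2 * π))⁻¹ * rexp (- a * h ^ 2 / (2 * (1 + a)))) * rexp (-((1+a)/2) * (x - a * h / (1+a)) ^ 2) := by
    intro x
    simp only [NNReal.coe_one, mul_one]
    rw [mul_assoc, ← Real.exp_add, mul_assoc, ← Real.exp_add]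
    congr 2
    field_simp
    ring
  simp_rw [key]
  rw [integral_const_mul, integral_sub_right_eq_self (fun x => rexp (-((1+a)/2) * x ^ 2)), integral_gaussian]
  have e1 : √(π / ((1+a)/2)) = √(2 * π) * rexp (-(1/2) * Real.log (1 + a)) := by
    have : π / ((1+a)/2) = (2 * π) / (1 + a) := by field_simp
    rw [this, Real.sqrt_div (by positivity), div_eq_mul_inv]
    congr 1
    rw [Real.sqrt_eq_rpow, ← Real.rpow_neg h1a.le, Real.rpow_def_of_pos h1a]
    congr 1; ring
  rw [e1, sub_eq_add_neg, Real.exp_add]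
  have : √(2 * π) ≠ 0 := by positivity
  field_simp

lemma aux_prod {n : ℕ} (lam h : Fin n → ℝ) (hl : ∀ i, 0 ≤ lam i) (x : ℝ) (hx : 0 ≤ x) :
    ∫ g, Real.exp (-(x * ∑ i, lam i * (h i - g i) ^ 2) / 2)
        ∂(Measure.pi fun _ : Fin n => ProbabilityTheory.gaussianReal 0 1)
      = Real.exp (∑ i, (-(1/2) * Real.log (1 + lam i * x)
          - lam i * x * h i ^ 2 / (2 * (1 + lam i * x)))) := by
  have : ∀ g : Fin n → ℝ, Real.exp (-(x * ∑ i, lam i * (h i - g i) ^ 2) / 2)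
      = ∏ i, Real.exp (-((lam i * x) * (h i - g i) ^ 2) / 2) := by
    intro g
    rw [← Real.exp_sum]
    congr 1
    rw [Finset.mul_sum, ← Finset.sum_neg_distrib, Finset.sum_div]
    refine Finset.sum_congr rfl fun i _ => ?_
    ring
  simp_rw [this]
  rw [integral_fintype_prod_eq_prod (f := fun i (y : ℝ) => Real.exp (-((lam i * x) * (h i - y) ^ 2) / 2)),
    Real.exp_sum]
  exact Finset.prod_congr rfl fun i _ => aux_gauss _ _ (mul_nonneg (hl i) hx)

lemma aux_window {Ω : Type*} [MeasurableSpace Ω] (P : Measure Ω) [IsProbabilityMeasure P]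
    (Y : Ω → ℝ) (hY : Measurable Y) (hY0 : ∀ ω, 0 ≤ Y ω) (L H u r s : ℝ)
    (hs : 0 ≤ s) (hr : 0 ≤ r) (hu : s ≤ u) :
    Real.exp (u * L / 2) * ((∫ ω, Real.exp (-(u * Y ω) / 2) ∂P)
      - Real.exp (r * L / 2) * (∫ ω, Real.exp (-((u + r) * Y ω) / 2) ∂P)
      - Real.exp (-((u - s) * H) / 2) * (∫ ω, Real.exp (-(s * Y ω) / 2) ∂P))
      ≤ (P {ω | Y ω ≤ H}).toReal := by
  have hIntg : ∀ x : ℝ, 0 ≤ x → Integrable (fun ω => Real.exp (-(x * Y ω) / 2)) P := by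
    intro x hx
    refine Integrable.of_bound (C := 1) (by fun_prop) (Filter.Eventually.of_forall fun ω => ?_)
    rw [Real.norm_eq_abs, abs_of_pos (Real.exp_pos _)]
    have := mul_nonneg hx (hY0 ω)
    exact Real.exp_le_one_iff.2 (by linarith)
  have hm : MeasurableSet {ω | Y ω ≤ H} := measurableSet_le hY measurable_const
  have hI : Integrable ({ω | Y ω ≤ H}.indicator (fun _ => (1:ℝ))) P :=
    (integrable_const 1).indicator hm
  have hpt : ∀ ω, Real.exp (-(u * Y ω) / 2) ≤
      Real.exp (-(u * L / 2)) * {ω | Y ω ≤ H}.indicator (fun _ => (1:ℝ)) ω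
      + Real.exp (r * L / 2) * Real.exp (-((u + r) * Y ω) / 2)
      + Real.exp (-((u - s) * H) / 2) * Real.exp (-(s * Y ω) / 2) := by
    intro ω
    have p1 : 0 ≤ Real.exp (-(u * L / 2)) * {ω | Y ω ≤ H}.indicator (fun _ => (1:ℝ)) ω :=
      mul_nonneg (Real.exp_pos _).le (Set.indicator_nonneg (fun _ _ => zero_le_one) _)
    have p2 : 0 ≤ Real.exp (r * L / 2) * Real.exp (-((u + r) * Y ω) / 2) := by positivity
    have p3 : 0 ≤ Real.exp (-((u - s) * H) / 2) * Real.exp (-(s * Y ω) / 2) := by positivity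
    rcases le_or_gt (Y ω) H with h1 | h1
    · rcases le_or_gt L (Y ω) with h2 | h2
      · have : Real.exp (-(u * Y ω) / 2) ≤
          Real.exp (-(u * L / 2)) * {ω | Y ω ≤ H}.indicator (fun _ => (1:ℝ)) ω := by
          rw [Set.indicator_of_mem (by exact h1), mul_one]
          apply Real.exp_le_exp.2
          nlinarith [mul_le_mul_of_nonneg_left h2 (hs.trans hu)]
        linarith
      · have : Real.exp (-(u * Y ω) / 2) ≤
          Real.exp (r * L / 2) * Real.exp (-((u + r) * Y ω) / 2) := by
          rw [← Real.exp_add]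
          apply Real.exp_le_exp.2
          nlinarith [mul_le_mul_of_nonneg_left h2.le hr]
        linarith
    · have : Real.exp (-(u * Y ω) / 2) ≤
          Real.exp (-((u - s) * H) / 2) * Real.exp (-(s * Y ω) / 2) := by
          rw [← Real.exp_add]
          apply Real.exp_le_exp.2
          nlinarith [mul_le_mul_of_nonneg_left h1.le (sub_nonneg.2 hu)]
      linarith
  have i1 := hI.const_mul (Real.exp (-(u * L / 2)))
  have i2 := (hIntg (u + r) (by linarith)).const_mul (Real.exp (r * L / 2))
  have i3 := (hIntg s hs).const_mul (Real.exp (-((u - s) * H) / 2))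
  have i12 : Integrable (fun ω => Real.exp (-(u * L / 2)) * {ω | Y ω ≤ H}.indicator (fun _ => (1:ℝ)) ω
      + Real.exp (r * L / 2) * Real.exp (-((u + r) * Y ω) / 2)) P := i1.add i2
  have hle := integral_mono (hIntg u (hs.trans hu)) (i12.add i3) hpt
  simp only [Pi.add_apply] at hle
  rw [integral_add i12 i3, integral_add i1 i2,
      integral_const_mul, integral_const_mul, integral_const_mul, integral_indicator_const _ hm] at hle
  simp only [smul_eq_mul, mul_one, Measure.real] at hle
  have hexp : Real.exp (u * L / 2) * Real.exp (-(u * L / 2)) = 1 := by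
    rw [← Real.exp_add]; simp
  calc _ ≤ Real.exp (u * L / 2) * (Real.exp (-(u * L / 2)) * (P {ω | Y ω ≤ H}).toReal) :=
        mul_le_mul_of_nonneg_left (by linarith) (Real.exp_pos _).le
    _ = _ := by rw [← mul_assoc, hexp, one_mul]

lemma aux_log_le (q : ℝ) (h1 : -1 < q) (h0 : q ≤ 0) : Real.log (1 + q) ≤ q - q ^ 2 / 2 := by
  have h := Real.hasSum_pow_div_log_of_abs_lt_one (x := -q) (by rw [abs_of_nonneg (by linarith)]; linarith)
  have h2 := sum_le_hasSum (Finset.range 2) (fun i _ => by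
    have : 0 ≤ -q := by linarith
    positivity) h
  simp [Finset.sum_range_succ] at h2
  norm_num at h2
  linarith

lemma aux_log_ge (q : ℝ) (h1 : -(1/2) ≤ q) : q - q ^ 2 ≤ Real.log (1 + q) := by
  rcases le_or_gt 0 q with h0 | h0
  · refine le_trans ?_ (Real.le_log_one_add_of_nonneg h0)
    rw [le_div_iff₀ (by linarith)]
    nlinarith [pow_nonneg h0 3, pow_nonneg h0 2]
  · have h := Real.abs_log_sub_add_sum_range_le (x := -q) (by rw [abs_of_nonneg (by linarith)]; linarith) 4
    have h2 := (abs_le.1 h).1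
    rw [abs_of_nonneg (by linarith)] at h2
    simp [Finset.sum_range_succ] at h2
    obtain ⟨v, rfl⟩ : ∃ v, q = -v := ⟨-q, by ring⟩
    have hv : 0 < v := by linarith
    have hv2 : v ≤ 1/2 := by linarith
    have h3 : v ^ 5 / (1 - v) ≤ 2 * v ^ 5 := by
      rw [div_le_iff₀ (by linarith)]
      nlinarith [pow_pos hv 5]
    norm_num at h2 h3 ⊢
    have h4 : v ^ 3 ≤ v ^ 2 * (1/2) := by nlinarith [pow_pos hv 2]
    have h5 : v ^ 4 ≤ v ^ 2 * (1/4) := by nlinarith [pow_pos hv 3]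
    have h6 : v ^ 5 ≤ v ^ 2 * (1/8) := by nlinarith [pow_pos hv 4]
    have e : (1:ℝ) + -v = 1 - v := by ring
    rw [e] at h2 ⊢
    have h7 := pow_pos hv 2
    linarith

/-- the per-coordinate remainder -/
lemma aux_term (l h T x : ℝ) (hl : 0 ≤ l) (hT : 0 < T) (hx : T / 2 ≤ x) :
    ∃ ρ : ℝ, (-(1/2) * Real.log (1 + l * x) - l * x * h ^ 2 / (2 * (1 + l * x)))
        + x * (h ^ 2 * l / (1 + l * T)) / 2
      = (-(1/2) * Real.log (1 + l * T))
        + (x - T) * (T * (h ^ 2 * l ^ 2 / (1 + l * T) ^ 2) - l / (1 + l * T)) / 2 + ρ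
      ∧ ρ ≤ 2 * (l ^ 2 / (4 * (1 + l * T) ^ 2) + l ^ 2 * h ^ 2 / (2 * (1 + l * T) ^ 3)) * (x - T) ^ 2
      ∧ (x ≤ T → (l ^ 2 / (4 * (1 + l * T) ^ 2) + l ^ 2 * h ^ 2 / (2 * (1 + l * T) ^ 3)) * (x - T) ^ 2 ≤ ρ) := by
  have hA : 0 < 1 + l * T := by positivity
  have hx0 : 0 < x := by linarith
  have hX : 0 < 1 + l * x := by positivity
  have hhalf : 1 + l * T ≤ 2 * (1 + l * x) := by nlinarith
  set q := l * (x - T) / (1 + l * T) with hq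
  have h1q : 1 + q = (1 + l * x) / (1 + l * T) := by rw [hq]; field_simp; ring
  have hqpos : 0 < 1 + q := by rw [h1q]; positivity
  have hqhalf : -(1/2) ≤ q := by
    have : 1 / 2 ≤ 1 + q := by
      rw [h1q, le_div_iff₀ hA]; linarith
    linarith
  have hlog : Real.log (1 + l * x) = Real.log (1 + l * T) + Real.log (1 + q) := by
    rw [h1q, Real.log_div hX.ne' hA.ne']; ring
  have hq2 : q ^ 2 = l ^ 2 / (1 + l * T) ^ 2 * (x - T) ^ 2 := by rw [hq]; field_simp
  refine ⟨(q - Real.log (1 + q)) / 2 + (x - T) ^ 2 * l ^ 2 * h ^ 2 / (2 * (1 + l * T) ^ 2 * (1 + l * x)), ?_, ?_, ?_⟩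
  · rw [hlog]
    have : (x - T) * (l / (1 + l * T)) = q := by rw [hq]; ring
    have e : (x - T) * (T * (h ^ 2 * l ^ 2 / (1 + l * T) ^ 2) - l / (1 + l * T)) / 2
      = (x - T) * (T * (h ^ 2 * l ^ 2 / (1 + l * T) ^ 2)) / 2 - q / 2 := by rw [← this]; ring
    rw [e]
    have e2 : - (l * x * h ^ 2 / (2 * (1 + l * x))) + x * (h ^ 2 * l / (1 + l * T)) / 2
       = (x - T) * (T * (h ^ 2 * l ^ 2 / (1 + l * T) ^ 2)) / 2 + (x - T) ^ 2 * l ^ 2 * h ^ 2 / (2 * (1 + l * T) ^ 2 * (1 + l * x)) := by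
      field_simp
      ring
    linarith
  · have h1 := aux_log_ge q hqhalf
    have h2 : (x - T) ^ 2 * l ^ 2 * h ^ 2 / (2 * (1 + l * T) ^ 2 * (1 + l * x))
        ≤ 2 * (l ^ 2 * h ^ 2 / (2 * (1 + l * T) ^ 3)) * (x - T) ^ 2 := by
      have : 2 * (l ^ 2 * h ^ 2 / (2 * (1 + l * T) ^ 3)) * (x - T) ^ 2
          = ((x - T) ^ 2 * l ^ 2 * h ^ 2) / ((1 + l * T) ^ 3) := by field_simp
      rw [this]
      apply div_le_div_of_nonneg_left (by positivity) (by positivity)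
      nlinarith [mul_le_mul_of_nonneg_left hhalf (sq_nonneg (1 + l * T))]
    have h3 : 2 * (l ^ 2 / (4 * (1 + l * T) ^ 2)) * (x - T) ^ 2 = q ^ 2 / 2 := by
      rw [hq2, mul_comm 4, ← div_div]; ring
    nlinarith
  · intro hxT
    have hq0 : q ≤ 0 := by
      rw [hq]; apply div_nonpos_of_nonpos_of_nonneg _ hA.le
      nlinarith
    have h1 := aux_log_le q (by linarith) hq0
    have h2 : (l ^ 2 * h ^ 2 / (2 * (1 + l * T) ^ 3)) * (x - T) ^ 2 ≤
       (x - T) ^ 2 * l ^ 2 * h ^ 2 / (2 * (1 + l * T) ^ 2 * (1 + l * x)) := by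
      have : (l ^ 2 * h ^ 2 / (2 * (1 + l * T) ^ 3)) * (x - T) ^ 2
          = ((x - T) ^ 2 * l ^ 2 * h ^ 2) / (2 * (1 + l * T) ^ 3) := by field_simp
      rw [this]
      apply div_le_div_of_nonneg_left (by positivity) (by positivity)
      have : 1 + l * x ≤ 1 + l * T := by nlinarith
      nlinarith [mul_le_mul_of_nonneg_left this (sq_nonneg (1 + l * T))]
    have h3 : (l ^ 2 / (4 * (1 + l * T) ^ 2)) * (x - T) ^ 2 = q ^ 2 / 4 := by
      rw [hq2]; field_simp
    nlinarith

lemma aux_F {n : ℕ} (lam h : Fin n → ℝ) (hl : ∀ i, 0 ≤ lam i) (T x : ℝ) (hT : 0 < T) (hx : T / 2 ≤ x)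
    (hst : ∑ i, lam i / (1 + lam i * T) = T * ∑ i, h i ^ 2 * lam i ^ 2 / (1 + lam i * T) ^ 2)
    (B : ℝ) (hB : B = ∑ i, (lam i ^ 2 / (4 * (1 + lam i * T) ^ 2)
      + lam i ^ 2 * h i ^ 2 / (2 * (1 + lam i * T) ^ 3))) :
    ∃ ρ : ℝ, (∑ i, (-(1/2) * Real.log (1 + lam i * x) - lam i * x * h i ^ 2 / (2 * (1 + lam i * x))))
        + x * (∑ i, h i ^ 2 * lam i / (1 + lam i * T)) / 2
      = -(1/2) * ∑ i, Real.log (1 + lam i * T) + ρ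
      ∧ ρ ≤ 2 * B * (x - T) ^ 2 ∧ (x ≤ T → B * (x - T) ^ 2 ≤ ρ) := by
  choose ρ h1 h2 h3 using fun i => aux_term (lam i) (h i) T x (hl i) hT hx
  refine ⟨∑ i, ρ i, ?_, ?_, ?_⟩
  · have e1 : ∑ i, (x - T) * (T * (h i ^ 2 * lam i ^ 2 / (1 + lam i * T) ^ 2)
        - lam i / (1 + lam i * T)) / 2 = 0 := by
      rw [← Finset.sum_div, ← Finset.mul_sum, Finset.sum_sub_distrib, ← Finset.mul_sum, hst]
      simp
    rw [Finset.mul_sum, Finset.sum_div, ← Finset.sum_add_distrib,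
      Finset.sum_congr rfl (fun i _ => h1 i), Finset.sum_add_distrib, Finset.sum_add_distrib, e1,
      Finset.mul_sum]
    ring
  · rw [hB, Finset.mul_sum, Finset.sum_mul]
    exact Finset.sum_le_sum fun i _ => h2 i
  · intro hxT
    rw [hB, Finset.sum_mul]
    exact Finset.sum_le_sum fun i _ => h3 i hxT

lemma aux_core {n : ℕ} (lam h : Fin n → ℝ) (hl : ∀ i, 0 ≤ lam i) (T e : ℝ) (hT : 0 < T) (he : 0 < e)
    (hst : ∑ i, lam i / (1 + lam i * T) = T * ∑ i, h i ^ 2 * lam i ^ 2 / (1 + lam i * T) ^ 2)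
    (hBe : ∑ i, (lam i ^ 2 / (4 * (1 + lam i * T) ^ 2)
      + lam i ^ 2 * h i ^ 2 / (2 * (1 + lam i * T) ^ 3)) ≤ e ^ 2 / 512)
    (hTe : 18 ≤ T * e / 4) :
    Real.exp (-68) * Real.exp (-(1/2) * ∑ i, Real.log (1 + lam i * T)) ≤
      ((Measure.pi fun _ : Fin n => ProbabilityTheory.gaussianReal 0 1)
        {g | ∑ i, lam i * (h i - g i) ^ 2 ≤ (∑ i, h i ^ 2 * lam i / (1 + lam i * T)) + e}).toReal := by
  set B := ∑ i, (lam i ^ 2 / (4 * (1 + lam i * T) ^ 2)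
      + lam i ^ 2 * h i ^ 2 / (2 * (1 + lam i * T) ^ 3)) with hB
  set d := ∑ i, h i ^ 2 * lam i / (1 + lam i * T) with hd
  set F0 := -(1/2) * ∑ i, Real.log (1 + lam i * T) with hF0
  have hYm : Measurable (fun g : Fin n → ℝ => ∑ i, lam i * (h i - g i) ^ 2) := by fun_prop
  have hY0 : ∀ g : Fin n → ℝ, 0 ≤ ∑ i, lam i * (h i - g i) ^ 2 := fun g =>
    Finset.sum_nonneg fun i _ => mul_nonneg (hl i) (sq_nonneg _)
  obtain ⟨S, hS⟩ : ∃ S : ℝ → ℝ, S = fun x => ∑ i, (-(1/2) * Real.log (1 + lam i * x)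
          - lam i * x * h i ^ 2 / (2 * (1 + lam i * x))) := ⟨_, rfl⟩
  have hwin : ∀ L u r s : ℝ, 0 ≤ s → 0 ≤ r → s ≤ u →
      Real.exp (u * L / 2 + S u) - Real.exp (u * L / 2 + r * L / 2 + S (u + r))
        - Real.exp (u * L / 2 + -((u - s) * (d + e)) / 2 + S s) ≤
      ((Measure.pi fun _ : Fin n => ProbabilityTheory.gaussianReal 0 1)
        {g | ∑ i, lam i * (h i - g i) ^ 2 ≤ d + e}).toReal := by
    intro L u r s hs hr hu
    have h := aux_window
      (Measure.pi fun _ : Fin n => ProbabilityTheory.gaussianReal 0 1) _ hYm hY0 L (d + e) u r s hs hr hu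
    rw [aux_prod lam _ hl _ (by linarith), aux_prod lam _ hl _ (by linarith),
      aux_prod lam _ hl _ (by linarith), mul_sub, mul_sub, ← mul_assoc, ← mul_assoc] at h
    simp only [← Real.exp_add] at h
    rw [hS]
    exact h
  have hF : ∀ x, T / 2 ≤ x → ∃ ρ, S x + x * d / 2 = F0 + ρ ∧ ρ ≤ 2 * B * (x - T) ^ 2
      ∧ (x ≤ T → B * (x - T) ^ 2 ≤ ρ) := by
    intro x hx
    rw [hS]
    exact aux_F lam h hl T x hT hx hst B hB
  have hB0 : 0 ≤ B := Finset.sum_nonneg fun i _ => by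
    have := hl i
    positivity
  have h2e : (3:ℝ) ≤ Real.exp 2 := by
    have := Real.add_one_le_exp (2:ℝ); linarith
  obtain ⟨ρ2, a2, b2, c2⟩ := hF T (by linarith)
  have c2' := c2 le_rfl
  have hρ2 : ρ2 = 0 := by
    simp at b2 c2'; linarith
  rcases le_or_gt 32 (B * T ^ 2) with hc | hc
  · have hBpos : 0 < B := by
      rcases hB0.lt_or_eq with h' | h'
      · exact h'
      · rw [← h'] at hc; norm_num at hc
    obtain ⟨y, hypos, hBy⟩ : ∃ y : ℝ, 0 < y ∧ B * y ^ 2 = 2 := by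
      refine ⟨√(2 / B), Real.sqrt_pos.2 (by positivity), ?_⟩
      rw [Real.sq_sqrt (by positivity)]; field_simp
    have hyT : y ≤ T / 4 := by
      apply (sq_le_sq₀ hypos.le (by positivity)).1
      by_contra hcon
      push Not at hcon
      have := mul_lt_mul_of_pos_left hcon hBpos
      nlinarith
    have hye : 32 ≤ y * e := by
      apply (sq_le_sq₀ (by norm_num) (by positivity)).1
      have : B * (512 * y ^ 2) ≤ e ^ 2 * y ^ 2 := by nlinarith [sq_nonneg y]
      nlinarith
    obtain ⟨ρ1, a1, b1, c1⟩ := hF (T - y) (by linarith)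
    obtain ⟨ρ3, a3, b3, c3⟩ := hF (T - 2 * y) (by linarith)
    have c1' := c1 (by linarith)
    have hρ1 : 2 ≤ ρ1 := by
      have e1 : B * (T - y - T) ^ 2 = B * y ^ 2 := by ring
      linarith
    have hρ3 : ρ3 ≤ 16 := by
      have e1 : 2 * B * (T - 2 * y - T) ^ 2 = 8 * (B * y ^ 2) := by ring
      linarith
    have h' := hwin d (T - y) y (T - 2 * y) (by linarith) hypos.le (by linarith)
    rw [show T - y + y = T by ring] at h'
    refine le_trans ?_ h'
    have k1 : Real.exp (F0 + 2) ≤ Real.exp ((T - y) * d / 2 + S (T - y)) :=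
      Real.exp_le_exp.2 (by linarith)
    have k2 : Real.exp ((T - y) * d / 2 + y * d / 2 + S T) ≤ Real.exp F0 :=
      Real.exp_le_exp.2 (by linarith)
    have k3 : Real.exp ((T - y) * d / 2 + -((T - y - (T - 2 * y)) * (d + e)) / 2 + S (T - 2 * y))
        ≤ Real.exp F0 :=
      Real.exp_le_exp.2 (by linarith)
    have k4 : Real.exp (-68) ≤ 1 := Real.exp_le_one_iff.2 (by norm_num)
    rw [Real.exp_add] at k1
    have k7 := mul_le_mul_of_nonneg_left h2e (Real.exp_pos F0).le
    have k8 := mul_le_mul_of_nonneg_right k4 (Real.exp_pos F0).le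
    linarith
  · obtain ⟨ρ1, a1, b1, c1⟩ := hF (T + T) (by linarith)
    obtain ⟨ρ3, a3, b3, c3⟩ := hF (T / 2) (by linarith)
    have e1 : 2 * B * (T + T - T) ^ 2 = 2 * (B * T ^ 2) := by ring
    have e3 : 2 * B * (T / 2 - T) ^ 2 = (B * T ^ 2) / 2 := by ring
    have hρ1 : ρ1 ≤ 64 := by linarith
    have hρ3 : ρ3 ≤ 16 := by linarith
    have h' := hwin (d - 132 / T) T T (T / 2) (by linarith) hT.le (by linarith)
    have e0 : T * (d - 132 / T) = T * d - 132 := by field_simp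
    rw [e0] at h'
    refine le_trans ?_ h'
    have k1 : Real.exp (F0 - 66) ≤ Real.exp ((T * d - 132) / 2 + S T) :=
      Real.exp_le_exp.2 (by linarith)
    have k2 : Real.exp ((T * d - 132) / 2 + (T * d - 132) / 2 + S (T + T)) ≤ Real.exp (F0 - 68) :=
      Real.exp_le_exp.2 (by linarith)
    have k3 : Real.exp ((T * d - 132) / 2 + -((T - T / 2) * (d + e)) / 2 + S (T / 2))
        ≤ Real.exp (F0 - 68) :=
      Real.exp_le_exp.2 (by linarith)
    have k5 : Real.exp (F0 - 66) = Real.exp (F0 - 68) * Real.exp 2 := by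
      rw [← Real.exp_add]; congr 1; ring
    have k6 : Real.exp (-68) * Real.exp F0 = Real.exp (F0 - 68) := by
      rw [← Real.exp_add]; congr 1; ring
    rw [k6]
    have k7 := mul_le_mul_of_nonneg_left h2e (Real.exp_pos (F0 - 68)).le
    linarith

lemma aux_T {n : ℕ} (hn : 0 < n) (lam : Fin n → ℝ) (hl : ∀ i, 0 ≤ lam i)
    (hsum : ∑ i, lam i = (n : ℝ)) (R : ℝ) (hR : 0 < R) :
    0 < Trc lam R ∧ Rrc lam (Trc lam R) = R := by
  have hn' : (0:ℝ) < n := by exact_mod_cast hn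
  apply Classical.epsilon_spec (p := fun T => 0 < T ∧ Rrc lam T = R)
  obtain ⟨i0, _, hi0⟩ : ∃ i ∈ Finset.univ, (0:ℝ) < lam i := by
    by_contra hcon
    push Not at hcon
    have := Finset.sum_nonpos hcon
    linarith
  have hcont : ContinuousOn (Rrc lam) (Set.Ici 0) := by
    unfold Rrc Real.logb
    refine continuousOn_const.mul (continuousOn_finsetSum _ fun i _ => ?_)
    refine ContinuousOn.div_const (ContinuousOn.log (by fun_prop) ?_) _
    intro x hx
    have := mul_nonneg (hl i) (Set.mem_Ici.1 hx)
    positivity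
  have h0 : Rrc lam 0 = 0 := by simp [Rrc]
  set x1 := (2:ℝ) ^ (2 * n * R) / lam i0 with hx1
  have hx1pos : 0 < x1 := by positivity
  have h1 : R ≤ Rrc lam x1 := by
    unfold Rrc
    have hge : 2 * n * R ≤ ∑ i, Real.logb 2 (1 + lam i * x1) := by
      calc 2 * n * R ≤ Real.logb 2 (1 + lam i0 * x1) := by
            rw [Real.le_logb_iff_rpow_le (by norm_num) (by positivity)]
            have : lam i0 * x1 = (2:ℝ) ^ (2 * n * R) := by rw [hx1]; field_simp
            linarith
        _ ≤ _ := Finset.single_le_sum (f := fun i => Real.logb 2 (1 + lam i * x1)) (fun i _ =>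
            Real.logb_nonneg (by norm_num) (by
              have := mul_nonneg (hl i) hx1pos.le
              linarith)) (Finset.mem_univ i0)
    rw [one_div, inv_mul_eq_div, le_div_iff₀ (by positivity)]
    linarith
  obtain ⟨T, hT, hTR⟩ := intermediate_value_Icc hx1pos.le (hcont.mono Set.Icc_subset_Ici_self)
    (show R ∈ Set.Icc (Rrc lam 0) (Rrc lam x1) from ⟨by rw [h0]; exact hR.le, h1⟩)
  refine ⟨T, lt_of_le_of_ne hT.1 ?_, hTR⟩
  rintro rfl
  rw [h0] at hTR
  exact hR.ne hTR

lemma aux_Tlb {n : ℕ} (hn : 0 < n) (lam : Fin n → ℝ) (hl : ∀ i, 0 ≤ lam i)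
    (hsum : ∑ i, lam i = (n : ℝ)) (R T : ℝ) (hT : 0 < T) (h : Rrc lam T = R) :
    2 * R * Real.log 2 ≤ T ∧ -(1/2) * ∑ i, Real.log (1 + lam i * T) = -(n * R * Real.log 2) := by
  have hn' : (0:ℝ) < n := by exact_mod_cast hn
  have hl2 : 0 < Real.log 2 := Real.log_pos (by norm_num)
  have e : ∑ i, Real.log (1 + lam i * T) = 2 * n * R * Real.log 2 := by
    rw [← h]
    unfold Rrc Real.logb
    rw [← Finset.sum_div]
    obtain ⟨Q, hQ⟩ : ∃ Q, Q = ∑ i, Real.log (1 + lam i * T) := ⟨_, rfl⟩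
    rw [← hQ]
    field_simp
  constructor
  · have : ∑ i, Real.log (1 + lam i * T) ≤ n * T := by
      rw [← hsum, Finset.sum_mul]
      refine Finset.sum_le_sum fun i _ => ?_
      have h1 := mul_nonneg (hl i) hT.le
      have := Real.log_le_sub_one_of_pos (show 0 < 1 + lam i * T by linarith)
      linarith
    rw [e] at this
    have h3 : n * (2 * R * Real.log 2) ≤ n * T := by linarith
    exact le_of_mul_le_mul_left h3 hn'
  · rw [e]; ring

lemma aux_single {n : ℕ} (hn : 0 < n) (lam w : Fin n → ℝ) (hl : ∀ i, 0 ≤ lam i)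
    (hsum : ∑ i, lam i = (n : ℝ)) (T T0 N η : ℝ) (hη : 0 < η) (hT0 : 0 < T0) (hT : T0 ≤ T)
    (hN : 0 < N) (hw : ∀ i, w i ^ 2 ≤ N) (hc1 : 72 * N ≤ T0 * (n * η))
    (hc2 : 384 * N ^ 2 ≤ T0 * n * η ^ 2) :
    Real.exp (-68) * Real.exp (-(1/2) * ∑ i, Real.log (1 + lam i * T)) ≤
      ((Measure.pi fun _ : Fin n => ProbabilityTheory.gaussianReal 0 1)
        {g | ∑ i, lam i * (w i - tauDef lam w T * g i) ^ 2
          ≤ (∑ i, w i ^ 2 * lam i / (1 + lam i * T)) + n * η}).toReal := by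
  have hn' : (0:ℝ) < n := by exact_mod_cast hn
  have hTpos : 0 < T := hT0.trans_le hT
  have hA : ∀ i, 0 < 1 + lam i * T := fun i => by
    have := mul_nonneg (hl i) hTpos.le
    linarith
  have hlnn : 0 ≤ ∑ i, Real.log (1 + lam i * T) := Finset.sum_nonneg fun i _ =>
    Real.log_nonneg (by have := mul_nonneg (hl i) hTpos.le; linarith)
  obtain ⟨S1, hS1⟩ : ∃ S1, S1 = ∑ j, lam j / (1 + lam j * T) := ⟨_, rfl⟩
  obtain ⟨S2, hS2⟩ : ∃ S2, S2 = ∑ j, (w j) ^ 2 * (lam j) ^ 2 / (1 + lam j * T) ^ 2 := ⟨_, rfl⟩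
  have ht : ∀ i, 0 ≤ lam i / (1 + lam i * T) := fun i => div_nonneg (hl i) (hA i).le
  have hS1pos : 0 < S1 := by
    rw [hS1]
    refine lt_of_le_of_ne (Finset.sum_nonneg fun i _ => ht i) fun h0 => ?_
    have h1 := (Finset.sum_eq_zero_iff_of_nonneg (fun i _ => ht i)).1 h0.symm
    have h2 : ∑ i, lam i = 0 := Finset.sum_eq_zero fun i hi => by
      have := h1 i hi
      rcases div_eq_zero_iff.1 this with h | h
      · exact h
      · exact absurd h (hA i).ne'
    linarith
  have hS2t : ∀ i, 0 ≤ (w i) ^ 2 * (lam i) ^ 2 / (1 + lam i * T) ^ 2 := fun i => by positivity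
  have hS2nn : 0 ≤ S2 := by rw [hS2]; exact Finset.sum_nonneg fun i _ => hS2t i
  obtain ⟨τ, hτ⟩ : ∃ τ, τ = tauDef lam w T := ⟨_, rfl⟩
  have hτ0 : 0 ≤ τ := by rw [hτ]; unfold tauDef; positivity
  have hτ2 : τ ^ 2 * S1 = T * S2 := by
    rw [hτ]; unfold tauDef
    rw [← hS1, ← hS2, div_pow, Real.sq_sqrt (by positivity), Real.sq_sqrt hS1pos.le]
    field_simp
  have hτN : τ ^ 2 ≤ N := by
    have : τ ^ 2 * S1 ≤ N * S1 := by
      rw [hτ2, hS1, hS2, Finset.mul_sum, Finset.mul_sum]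
      refine Finset.sum_le_sum fun i _ => ?_
      have h1 : T * (w i ^ 2 * lam i ^ 2 / (1 + lam i * T) ^ 2)
          = (w i ^ 2) * (lam i / (1 + lam i * T)) * (lam i * T / (1 + lam i * T)) := by
        have := (hA i).ne'
        field_simp
      rw [h1]
      have h2 : lam i * T / (1 + lam i * T) ≤ 1 := by
        rw [div_le_one (hA i)]; linarith
      calc _ ≤ (w i ^ 2) * (lam i / (1 + lam i * T)) * 1 :=
            mul_le_mul_of_nonneg_left h2 (mul_nonneg (sq_nonneg _) (ht i))
        _ ≤ _ := by rw [mul_one]; exact mul_le_mul_of_nonneg_right (hw i) (ht i)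
    exact le_of_mul_le_mul_right this hS1pos
  rw [← hτ]
  rcases hτ0.eq_or_lt with h0 | hτpos
  · have hS20 : S2 = 0 := by
      rw [← h0] at hτ2
      have : T * S2 = 0 := by rw [← hτ2]; simp
      rcases mul_eq_zero.1 this with h | h
      · exact absurd h hTpos.ne'
      · exact h
    rw [hS2] at hS20
    have h1 := (Finset.sum_eq_zero_iff_of_nonneg (fun i _ => hS2t i)).1 hS20
    have h2 : ∀ i, lam i * w i ^ 2 = 0 := fun i => by
      have h3 := h1 i (Finset.mem_univ i)
      rcases div_eq_zero_iff.1 h3 with h | h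
      · rcases mul_eq_zero.1 h with h | h
        · rw [h, mul_zero]
        · rw [pow_eq_zero_iff (by norm_num)] at h
          rw [h, zero_mul]
      · exact absurd h (pow_pos (hA i) 2).ne'
    have h3 : {g : Fin n → ℝ | ∑ i, lam i * (w i - τ * g i) ^ 2
          ≤ (∑ i, w i ^ 2 * lam i / (1 + lam i * T)) + n * η} = Set.univ := by
      ext g
      simp only [Set.mem_ofPred_eq, Set.mem_univ, iff_true]
      rw [← h0]
      simp only [zero_mul, sub_zero, h2, Finset.sum_const_zero]
      have : 0 ≤ ∑ i, w i ^ 2 * lam i / (1 + lam i * T) := Finset.sum_nonneg fun i _ =>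
        div_nonneg (mul_nonneg (sq_nonneg _) (hl i)) (hA i).le
      positivity
    rw [h3, measure_univ, ENNReal.toReal_one, ← Real.exp_add]
    exact Real.exp_le_one_iff.2 (by linarith)
  · have hτne := hτpos.ne'
    have hτ2pos : 0 < τ ^ 2 := by positivity
    have hcore := aux_core lam (fun i => w i / τ) hl T (n * η / τ ^ 2) hTpos (by positivity)
      (by
        have : ∑ i, (w i / τ) ^ 2 * lam i ^ 2 / (1 + lam i * T) ^ 2 = S2 / τ ^ 2 := by
          rw [hS2, Finset.sum_div]
          refine Finset.sum_congr rfl fun i _ => ?_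
          have := (hA i).ne'
          field_simp
        rw [this, ← hS1, ← mul_div_assoc, ← hτ2]
        field_simp)
      (by
        have hb : ∀ i, lam i ^ 2 / (4 * (1 + lam i * T) ^ 2)
            + lam i ^ 2 * (w i / τ) ^ 2 / (2 * (1 + lam i * T) ^ 3)
            ≤ lam i * (3 / 4 * N ^ 2 / (T0 * (τ ^ 2) ^ 2)) := by
          intro i
          have hlT : lam i * T / (1 + lam i * T) ≤ 1 := by
            rw [div_le_one (hA i)]; linarith
          have hq : lam i ^ 2 / (1 + lam i * T) ^ 2 ≤ lam i / T0 := by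
            rw [div_le_div_iff₀ (pow_pos (hA i) 2) hT0]
            have h1 : lam i * T0 ≤ lam i * T := mul_le_mul_of_nonneg_left hT (hl i)
            have h2 : lam i * T ≤ (1 + lam i * T) ^ 2 := by
              have := mul_nonneg (hl i) hTpos.le
              nlinarith
            have := mul_le_mul_of_nonneg_left (h1.trans h2) (hl i)
            linarith
          have hq3 : lam i ^ 2 * (w i / τ) ^ 2 / (2 * (1 + lam i * T) ^ 3)
              ≤ (lam i ^ 2 / (1 + lam i * T) ^ 2) * ((w i / τ) ^ 2 / 2) := by
            rw [div_mul_div_comm]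
            apply div_le_div_of_nonneg_left (by positivity) (by have := hA i; positivity)
            have h1 : (1 + lam i * T) ^ 2 * 1 ≤ (1 + lam i * T) ^ 2 * (1 + lam i * T) :=
              mul_le_mul_of_nonneg_left (by have := mul_nonneg (hl i) hTpos.le; linarith) (sq_nonneg _)
            nlinarith
          have hw2 : (w i / τ) ^ 2 ≤ N ^ 2 / (τ ^ 2) ^ 2 := by
            rw [div_pow, div_le_div_iff₀ hτ2pos (by positivity)]
            have : w i ^ 2 * τ ^ 2 ≤ N * N := mul_le_mul (hw i) hτN hτ2pos.le hN.le
            nlinarith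
          have h1N : 1 ≤ N ^ 2 / (τ ^ 2) ^ 2 := by
            rw [one_le_div (by positivity)]
            exact pow_le_pow_left₀ hτ2pos.le hτN 2
          have hq4 : lam i ^ 2 / (4 * (1 + lam i * T) ^ 2) = (lam i ^ 2 / (1 + lam i * T) ^ 2) * (1 / 4) := by
            rw [div_mul_div_comm, mul_one, mul_comm 4]
          calc _ ≤ (lam i ^ 2 / (1 + lam i * T) ^ 2) * (1 / 4 + (w i / τ) ^ 2 / 2) := by
                rw [hq4]; linarith
            _ ≤ (lam i / T0) * (3 / 4 * (N ^ 2 / (τ ^ 2) ^ 2)) := by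
                apply mul_le_mul hq (by linarith) (by positivity) (div_nonneg (hl i) hT0.le)
            _ = _ := by field_simp
        refine (Finset.sum_le_sum fun i _ => hb i).trans ?_
        rw [← Finset.sum_mul, hsum]
        have e1 : n * (3 / 4 * N ^ 2 / (T0 * (τ ^ 2) ^ 2)) = (384 * N ^ 2) * (n / (512 * T0 * (τ ^ 2) ^ 2)) := by
          field_simp; norm_num
        have e2 : (n * η / τ ^ 2) ^ 2 / 512 = (T0 * n * η ^ 2) * (n / (512 * T0 * (τ ^ 2) ^ 2)) := by
          field_simp
        rw [e1, e2]
        exact mul_le_mul_of_nonneg_right hc2 (by positivity))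
      (by
        rw [le_div_iff₀ (by norm_num), ← mul_div_assoc, le_div_iff₀ hτ2pos]
        have : T0 * (n * η) ≤ T * (n * η) := mul_le_mul_of_nonneg_right hT (by positivity)
        nlinarith)
    refine hcore.trans (le_of_eq ?_)
    congr 2
    ext g
    simp only [Set.mem_ofPred_eq]
    have e1 : ∑ i, lam i * (w i - τ * g i) ^ 2 = τ ^ 2 * ∑ i, lam i * (w i / τ - g i) ^ 2 := by
      rw [Finset.mul_sum]
      refine Finset.sum_congr rfl fun i _ => ?_
      field_simp
    have e2 : ∑ i, w i ^ 2 * lam i / (1 + lam i * T) + n * η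
        = τ ^ 2 * (∑ i, (w i / τ) ^ 2 * lam i / (1 + lam i * T) + n * η / τ ^ 2) := by
      rw [mul_add, Finset.mul_sum]
      congr 1
      · refine Finset.sum_congr rfl fun i _ => ?_
        field_simp
      · field_simp
    rw [e1, e2, mul_le_mul_iff_right₀ hτ2pos]

lemma aux_code {Ω : Type*} [MeasurableSpace Ω] (P : Measure Ω) [IsProbabilityMeasure P] (M : ℕ)
    (A : Set Ω) (hA : MeasurableSet A) :
    1 - Real.exp (-(M * (P A).toReal)) ≤
      ((Measure.pi fun _ : Fin M => P) {C | ∃ i, C i ∈ A}).toReal := by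
  have h1 : {C : Fin M → Ω | ∃ i, C i ∈ A} = (Set.univ.pi fun _ => Aᶜ)ᶜ := by
    ext C; simp
  have hm : MeasurableSet (Set.univ.pi fun _ : Fin M => Aᶜ) :=
    MeasurableSet.univ_pi fun _ => hA.compl
  have h2 := prob_compl_eq_one_sub (μ := Measure.pi fun _ : Fin M => P) hm
  have h3 : P.real Aᶜ = 1 - P.real A := by rw [measureReal_compl hA]; simp
  rw [h1, h2, ENNReal.toReal_sub_of_le prob_le_one (by simp), Measure.pi_pi, ENNReal.toReal_prod]
  simp only [Finset.prod_const, Finset.card_univ, Fintype.card_fin, ENNReal.toReal_one]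
  change _ ≤ 1 - (P.real Aᶜ) ^ M
  rw [h3]
  change 1 - Real.exp (-(M * P.real A)) ≤ _
  have h4 : (1 - P.real A) ^ M ≤ (Real.exp (-P.real A)) ^ M :=
    pow_le_pow_left₀ (by have := measureReal_le_one (μ := P) (s := A); linarith)
      (by have := Real.add_one_le_exp (-P.real A); linarith) M
  rw [← Real.exp_nat_mul] at h4
  have : (M:ℝ) * -P.real A = -(M * P.real A) := by ring
  rw [this] at h4
  linarith

lemma aux_dSig {n : ℕ} (U : Matrix (Fin n) (Fin n) ℝ) (lam W c : Fin n → ℝ) (t : ℝ) :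
    dSig (U * Matrix.diagonal lam * Uᵀ) W (t • c)
      = ∑ i, lam i * (Uᵀ.mulVec W i - t * Uᵀ.mulVec c i) ^ 2 := by
  unfold dSig
  rw [← Matrix.mulVec_mulVec, ← Matrix.mulVec_mulVec, Matrix.dotProduct_mulVec,
    ← Matrix.mulVec_transpose, Matrix.mulVec_sub, Matrix.mulVec_smul]
  simp only [dotProduct, Matrix.mulVec_diagonal, Pi.sub_apply, Pi.smul_apply, smul_eq_mul]
  refine Finset.sum_congr rfl fun i _ => ?_
  ring

lemma aux_pow (β K : ℝ) (hβ : β < 1) (hK : 0 < K) :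
    ∀ᶠ n : ℕ in Filter.atTop, (n : ℝ) ^ β ≤ K * n := by
  have h := (tendsto_rpow_atTop (show 0 < 1 - β by linarith)).comp tendsto_natCast_atTop_atTop
  filter_upwards [h.eventually_ge_atTop (1 / K), Filter.eventually_gt_atTop 0] with n hn hn0
  have hn' : (0:ℝ) < n := by exact_mod_cast hn0
  simp only [Function.comp] at hn
  have e : (n:ℝ) = (n:ℝ) ^ β * (n:ℝ) ^ (1 - β) := by
    rw [← Real.rpow_add hn']; simp
  have hp : 0 < (n:ℝ) ^ β := Real.rpow_pos_of_pos hn' _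
  rw [div_le_iff₀ hK] at hn
  calc (n:ℝ) ^ β = (n:ℝ) ^ β * 1 := by ring
    _ ≤ (n:ℝ) ^ β * ((n:ℝ) ^ (1 - β) * K) := mul_le_mul_of_nonneg_left hn hp.le
    _ = K * ((n:ℝ) ^ β * (n:ℝ) ^ (1 - β)) := by ring
    _ = K * n := by rw [← e]

/-- Gaussian codebook success (Lemma on random Gaussian code).
The sup norm `‖·‖` on `Fin n → ℝ` is `‖·‖∞`. -/
theorem stmt_6 (Rstar ε η α : ℝ) (hRstar : 0 < Rstar) (hε : 0 < ε) (hη : 0 < η)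
    (hα : 0 < α) (hα4 : α < 1 / 4) :
    ∃ c : ℝ, 0 < c ∧ ∃ n₀ : ℕ, ∀ n : ℕ, n₀ ≤ n →
      ∀ (W : Fin n → ℝ) (Sig U : Matrix (Fin n) (Fin n) ℝ) (lam : Fin n → ℝ),
        U * Uᵀ = 1 → Sig = U * Matrix.diagonal lam * Uᵀ →
        (∀ i, 0 ≤ lam i) → (∑ i, lam i) = (n : ℝ) →
        ‖Uᵀ.mulVec W‖ ≤ (n : ℝ) ^ α →
        1 - Real.exp (-(2 : ℝ) ^ ((n : ℝ) * ε * (1 - c * (n : ℝ) ^ (4 * α - 1)))) ≤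
          (codebookMeasure n ⌊(2 : ℝ) ^ ((n : ℝ) * (Rstar + ε))⌋₊
            {C | (1 / (n : ℝ)) *
                (⨅ i, dSig Sig W (tauDef lam (Uᵀ.mulVec W) (Trc lam Rstar) • C i))
              ≤ DDrcV lam (Uᵀ.mulVec W) Rstar + η}).toReal := by

  have hl2 : 0 < Real.log 2 := Real.log_pos (by norm_num)
  obtain ⟨T0, hT0⟩ : ∃ T0, T0 = 2 * Rstar * Real.log 2 := ⟨_, rfl⟩
  have hT0pos : 0 < T0 := by rw [hT0]; positivity
  refine ⟨70 / (ε * Real.log 2), by positivity, ?_⟩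
  have hev := (aux_pow (2 * α) (T0 * η / 72) (by linarith) (by positivity)).and
    ((aux_pow (4 * α) (T0 * η ^ 2 / 384) (by linarith) (by positivity)).and
      (Filter.eventually_gt_atTop 0))
  obtain ⟨n₀, hn₀⟩ := Filter.eventually_atTop.1 hev
  refine ⟨n₀, fun n hn W Sig U lam hU hSig hl hsum hW => ?_⟩
  obtain ⟨hc1, hc2, hnpos⟩ := hn₀ n hn
  have hn' : (0:ℝ) < n := by exact_mod_cast hnpos
  obtain ⟨hTpos, hTR⟩ := aux_T hnpos lam hl hsum Rstar hRstar
  obtain ⟨hTlb, hlog⟩ := aux_Tlb hnpos lam hl hsum Rstar _ hTpos hTR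
  rw [← hT0] at hTlb
  set T := Trc lam Rstar with hT
  set w := Uᵀ.mulVec W with hw
  have hN2 : ((n:ℝ) ^ (2 * α)) ^ 2 = (n:ℝ) ^ (4 * α) := by
    rw [← Real.rpow_natCast, ← Real.rpow_mul hn'.le]; congr 1; push_cast; ring
  have hwN : ∀ i, w i ^ 2 ≤ (n:ℝ) ^ (2 * α) := by
    intro i
    have h1 : |w i| ≤ (n:ℝ) ^ α := (norm_le_pi_norm w i).trans hW
    have h2 : ((n:ℝ) ^ α) ^ 2 = (n:ℝ) ^ (2 * α) := by
      rw [← Real.rpow_natCast, ← Real.rpow_mul hn'.le]; congr 1; push_cast; ring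
    rw [← h2, ← sq_abs]
    exact pow_le_pow_left₀ (abs_nonneg _) h1 2
  have hsingle := aux_single hnpos lam w hl hsum T T0 ((n:ℝ) ^ (2 * α)) η hη hT0pos hTlb
    (by positivity) hwN (by linarith) (by rw [hN2]; linarith)
  rw [hlog] at hsingle
  set H := (∑ i, w i ^ 2 * lam i / (1 + lam i * T)) + n * η with hH
  set A : Set (Fin n → ℝ) := {c | dSig Sig W (tauDef lam w T • c) ≤ H} with hA
  have hAeq : A = (fun x => Uᵀ.mulVec x) ⁻¹'
      {g | ∑ i, lam i * (w i - tauDef lam w T * g i) ^ 2 ≤ H} := by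
    ext c
    simp only [hA, hSig, aux_dSig, Set.mem_ofPred_eq, Set.mem_preimage, hw]
  have hmB : MeasurableSet {g : Fin n → ℝ | ∑ i, lam i * (w i - tauDef lam w T * g i) ^ 2 ≤ H} :=
    measurableSet_le (by fun_prop) measurable_const
  have hlin : Measurable (fun x : Fin n → ℝ => Uᵀ.mulVec x) :=
    (Matrix.mulVecLin Uᵀ).continuous_of_finiteDimensional.measurable
  have hmA : MeasurableSet A := by rw [hAeq]; exact hlin hmB
  have hp : Real.exp (-68) * Real.exp (-(n * Rstar * Real.log 2)) ≤ (stdGaussian n A).toReal := by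
    rw [hAeq]
    unfold stdGaussian
    rw [← Measure.map_apply hlin hmB, aux_rot U hU]
    exact hsingle
  have : IsProbabilityMeasure (stdGaussian n) := by unfold stdGaussian; infer_instance
  set M := ⌊(2 : ℝ) ^ ((n : ℝ) * (Rstar + ε))⌋₊ with hM
  have hx1 : (1:ℝ) ≤ (2 : ℝ) ^ ((n : ℝ) * (Rstar + ε)) :=
    Real.one_le_rpow (by norm_num) (by positivity)
  have hM1 : (1:ℝ) ≤ M := by exact_mod_cast Nat.le_floor (by simpa using hx1)
  have hM2 := Nat.lt_floor_add_one ((2 : ℝ) ^ ((n : ℝ) * (Rstar + ε)))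
  rw [← hM] at hM2
  have hMge : (2 : ℝ) ^ ((n : ℝ) * (Rstar + ε)) / 2 ≤ M := by linarith
  have hcode := aux_code (stdGaussian n) M A hmA
  have hsub : {C : Fin M → Fin n → ℝ | ∃ i, C i ∈ A} ⊆ {C | (1 / (n : ℝ)) *
                (⨅ i, dSig Sig W (tauDef lam w T • C i)) ≤ DDrcV lam w Rstar + η} := by
    rintro C ⟨i, hi⟩
    have hi' : dSig Sig W (tauDef lam w T • C i) ≤ H := hi
    have hbdd : BddBelow (Set.range fun i => dSig Sig W (tauDef lam w T • C i)) := by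
      refine ⟨0, ?_⟩
      rintro _ ⟨j, rfl⟩
      simp only [hSig, aux_dSig]
      exact Finset.sum_nonneg fun k _ => mul_nonneg (hl k) (sq_nonneg _)
    have h1 := (ciInf_le hbdd i).trans hi'
    have h2 : DDrcV lam w Rstar + η = (1 / (n:ℝ)) * H := by
      unfold DDrcV DrcV
      rw [← hT, hH, mul_add]
      congr 1
      field_simp
    simp only [Set.mem_ofPred_eq]
    rw [h2]
    exact mul_le_mul_of_nonneg_left h1 (by positivity)
  have hmono : ((codebookMeasure n M) {C | ∃ i, C i ∈ A}).toReal ≤ ((codebookMeasure n M)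
      {C | (1 / (n : ℝ)) * (⨅ i, dSig Sig W (tauDef lam w T • C i)) ≤ DDrcV lam w Rstar + η}).toReal := by
    have : IsProbabilityMeasure (codebookMeasure n M) := by unfold codebookMeasure; infer_instance
    exact ENNReal.toReal_mono (measure_ne_top _ _) (measure_mono hsub)
  refine le_trans ?_ (le_trans hcode hmono)
  have hfin : (2 : ℝ) ^ ((n : ℝ) * ε * (1 - 70 / (ε * Real.log 2) * (n : ℝ) ^ (4 * α - 1)))
      ≤ M * (stdGaussian n A).toReal := by
    have e1 : (n:ℝ) * (n:ℝ) ^ (4 * α - 1) = (n:ℝ) ^ (4 * α) := by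
      rw [Real.rpow_sub_one hn'.ne']; field_simp
    have h1n : (1:ℝ) ≤ (n:ℝ) ^ (4 * α) :=
      Real.one_le_rpow (by exact_mod_cast hnpos) (by linarith)
    have h2e : (3:ℝ) ≤ Real.exp 2 := by
      have := Real.add_one_le_exp (2:ℝ); linarith
    have h3 : (2 : ℝ) ^ ((n : ℝ) * ε * (1 - 70 / (ε * Real.log 2) * (n : ℝ) ^ (4 * α - 1)))
        = Real.exp (Real.log 2 * (n * ε) - 70 * (n:ℝ) ^ (4 * α)) := by
      rw [Real.rpow_def_of_pos (by norm_num), ← e1]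
      congr 1
      field_simp
    have h4 : Real.exp (Real.log 2 * (n * ε) - 70 * (n:ℝ) ^ (4 * α))
        ≤ Real.exp (Real.log 2 * (n * ε) - 68 - 2) := Real.exp_le_exp.2 (by linarith)
    have h5 : Real.exp (Real.log 2 * (n * ε) - 68 - 2) ≤ Real.exp (Real.log 2 * (n * ε) - 68) / 2 := by
      rw [Real.exp_sub _ 2]
      exact div_le_div_of_nonneg_left (Real.exp_pos _).le (by norm_num) (by linarith)
    have h6 : Real.exp (Real.log 2 * (n * ε) - 68) / 2 = (2 : ℝ) ^ ((n : ℝ) * (Rstar + ε)) / 2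
        * (Real.exp (-68) * Real.exp (-(n * Rstar * Real.log 2))) := by
      rw [Real.rpow_def_of_pos (by norm_num), div_mul_eq_mul_div, ← Real.exp_add, ← Real.exp_add]
      congr 2
      ring
    rw [h3]
    refine (h4.trans h5).trans ?_
    rw [h6]
    exact mul_le_mul hMge hp (by positivity) (by positivity)
  have := Real.exp_le_exp.2 (neg_le_neg hfin)
  linarith
end

section
/- Fix a constant R* > 0 and γ₂ > 0. Let s, ŝ ∈ ℝⁿ with sⱼ, ŝⱼ ≥ 0, Σⱼ sⱼ = Σⱼ ŝⱼ = n, and ‖s − ŝ‖₂ ≤ γ₂ √n. Let T = T_rc(s, R*) and T̂ = T_rc(ŝ, R*). Then |T − T̂| ≤ γ₂ n · 2^{4nR*}. -/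
open Real

/-- Euclidean (`ℓ₂`) norm of a vector in `ℝⁿ`. -/
noncomputable def l2norm {n : ℕ} (v : Fin n → ℝ) : ℝ :=
  Real.sqrt (∑ i, (v i) ^ 2)

theorem sum_log_of_Rrc {n : ℕ} (R : ℝ) (hR : 0 < R) (s : Fin n → ℝ) (T : ℝ) (h : Rrc s T = R) :
    0 < (n : ℝ) ∧ ∑ i, Real.log (1 + s i * T) = 2 * n * R * Real.log 2 := by
  have hn : (n : ℝ) ≠ 0 := by
    intro h0
    simp [Rrc, h0] at h
    linarith
  have hl : Real.log 2 ≠ 0 := (Real.log_pos (by norm_num)).ne'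
  refine ⟨lt_of_le_of_ne (Nat.cast_nonneg n) hn.symm, ?_⟩
  rw [← h]
  simp only [Rrc, Real.logb]
  rw [← Finset.sum_div]
  generalize ∑ i, Real.log (1 + s i * T) = X
  field_simp

theorem one_add_le_K {n : ℕ} (s : Fin n → ℝ) (hs : ∀ j, 0 ≤ s j) (T L : ℝ) (hT : 0 < T)
    (h : ∑ i, Real.log (1 + s i * T) = L) (i : Fin n) : 1 + s i * T ≤ Real.exp L := by
  have hp : ∀ j, 0 ≤ s j * T := fun j => mul_nonneg (hs j) hT.le
  rw [← Real.log_le_iff_le_exp (by linarith [hp i]), ← h]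
  exact Finset.single_le_sum (f := fun i => Real.log (1 + s i * T))
    (fun j _ => Real.log_nonneg (by linarith [hp j])) (Finset.mem_univ i)

theorem one_side {n : ℕ} (hn : 0 < (n : ℝ)) (L γ : ℝ) (hγ : 0 < γ)
    (s sh : Fin n → ℝ) (hs : ∀ j, 0 ≤ s j) (hsh : ∀ j, 0 ≤ sh j)
    (hsum : ∑ j, s j = (n : ℝ)) (hsumh : ∑ j, sh j = (n : ℝ))
    (hclose : ∑ j, |s j - sh j| ≤ γ * n)
    (T Th : ℝ) (hT : 0 < T) (hTh : 0 < Th)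
    (h1 : ∑ i, Real.log (1 + s i * T) = L) (h2 : ∑ i, Real.log (1 + sh i * Th) = L) :
    T - Th ≤ γ * n * (Real.exp L) ^ 2 := by
  have hK := Real.exp_pos L
  have hn1 : (1 : ℝ) ≤ n := by
    have : 0 < n := by exact_mod_cast hn
    exact_mod_cast this
  rcases le_total T Th with hle | hle
  · have : 0 ≤ γ * n * (Real.exp L) ^ 2 := by positivity
    linarith
  have b1 := one_add_le_K s hs T L hT h1
  have b2 := one_add_le_K sh hsh Th L hTh h2
  set K := Real.exp L
  have hThK : Th ≤ K := by
    have : ∑ i : Fin n, (1 + sh i * Th) ≤ ∑ i : Fin n, K := Finset.sum_le_sum fun i _ => b2 i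
    rw [Finset.sum_add_distrib, ← Finset.sum_mul, hsumh] at this
    simp at this
    nlinarith
  have key : ∀ i, s i * (T - Th) / K - |s i - sh i| * Th ≤
      Real.log (1 + s i * T) - Real.log (1 + sh i * Th) := by
    intro i
    have p1 : 0 ≤ s i * T := mul_nonneg (hs i) hT.le
    have p2 : 0 ≤ s i * Th := mul_nonneg (hs i) hTh.le
    have p3 : 0 ≤ sh i * Th := mul_nonneg (hsh i) hTh.le
    have a1 : s i * (T - Th) / K ≤ Real.log (1 + s i * T) - Real.log (1 + s i * Th) := by
      have := Real.log_le_sub_one_of_pos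
        (div_pos (by linarith : 0 < 1 + s i * Th) (by linarith : 0 < 1 + s i * T))
      rw [Real.log_div (by linarith) (by linarith)] at this
      have e : (1 + s i * Th) / (1 + s i * T) - 1 = - (s i * (T - Th) / (1 + s i * T)) := by
        have : 1 + s i * T ≠ 0 := by linarith
        field_simp
        ring
      have : s i * (T - Th) / K ≤ s i * (T - Th) / (1 + s i * T) :=
        div_le_div_of_nonneg_left (mul_nonneg (hs i) (by linarith)) (by linarith) (b1 i)
      linarith
    have a2 : Real.log (1 + sh i * Th) - Real.log (1 + s i * Th) ≤ |s i - sh i| * Th := by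
      have := Real.log_le_sub_one_of_pos
        (div_pos (by linarith : 0 < 1 + sh i * Th) (by linarith : 0 < 1 + s i * Th))
      rw [Real.log_div (by linarith) (by linarith)] at this
      refine this.trans ?_
      rw [sub_le_iff_le_add, div_le_iff₀ (by linarith)]
      have q : sh i - s i ≤ |s i - sh i| := by rw [abs_sub_comm]; exact le_abs_self _
      have q0 := abs_nonneg (s i - sh i)
      have := mul_nonneg (mul_nonneg q0 hTh.le) p2
      nlinarith [mul_le_mul_of_nonneg_right q hTh.le]
    linarith
  have S := Finset.sum_le_sum fun i (_ : i ∈ Finset.univ) => key i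
  rw [Finset.sum_sub_distrib, Finset.sum_sub_distrib, h1, h2, ← Finset.sum_div,
    ← Finset.sum_mul, ← Finset.sum_mul, hsum] at S
  have S2 : n * (T - Th) / K ≤ γ * n * K := by
    have := mul_le_mul hclose hThK hTh.le (by positivity)
    linarith
  rw [div_le_iff₀ hK] at S2
  have : T - Th ≤ n * (T - Th) := by nlinarith
  nlinarith

/-- perturbation bound for `T_rc`: if `T = T_rc(s, R*)` and
`T̂ = T_rc(ŝ, R*)` (the unique positive solutions of `R_rc(·, T) = R*`) and
`‖s - ŝ‖₂ ≤ γ₂ √n`, then `|T - T̂| ≤ γ₂ n 2^{4nR*}`. -/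
theorem stmt_12 (n : ℕ) (Rstar γ₂ : ℝ) (hRstar : 0 < Rstar) (hγ : 0 < γ₂)
    (s sh : Fin n → ℝ) (hs : ∀ j, 0 ≤ s j) (hsh : ∀ j, 0 ≤ sh j)
    (hsum : ∑ j, s j = (n : ℝ)) (hsumh : ∑ j, sh j = (n : ℝ))
    (hclose : l2norm (s - sh) ≤ γ₂ * Real.sqrt (n : ℝ))
    (T Th : ℝ) (hT : 0 < T) (hTR : Rrc s T = Rstar)
    (hTh : 0 < Th) (hThR : Rrc sh Th = Rstar) :
    |T - Th| ≤ γ₂ * (n : ℝ) * (2 : ℝ) ^ (4 * (n : ℝ) * Rstar) := by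
  obtain ⟨hn, h1⟩ := sum_log_of_Rrc Rstar hRstar s T hTR
  obtain ⟨-, h2⟩ := sum_log_of_Rrc Rstar hRstar sh Th hThR
  have hc : ∑ j, |s j - sh j| ≤ γ₂ * n := by
    have cs := sq_sum_le_card_mul_sum_sq (s := Finset.univ) (f := fun j => |s j - sh j|)
    simp only [sq_abs, Finset.card_univ, Fintype.card_fin] at cs
    have h0 : 0 ≤ ∑ i, (s i - sh i) ^ 2 := Finset.sum_nonneg fun i _ => sq_nonneg _
    have hq : ∑ i, (s i - sh i) ^ 2 ≤ γ₂ ^ 2 * n := by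
      simp only [l2norm, Pi.sub_apply] at hclose
      have := pow_le_pow_left₀ (Real.sqrt_nonneg _) hclose 2
      rwa [Real.sq_sqrt h0, mul_pow, Real.sq_sqrt hn.le] at this
    refine (pow_le_pow_iff_left₀ (Finset.sum_nonneg fun i _ => abs_nonneg _) (by positivity) two_ne_zero).1 ?_
    calc _ ≤ _ := cs
      _ ≤ n * (γ₂ ^ 2 * n) := by gcongr
      _ = _ := by ring
  have hc' : ∑ j, |sh j - s j| ≤ γ₂ * n := by
    simpa only [abs_sub_comm] using hc
  have e : (2 : ℝ) ^ (4 * (n : ℝ) * Rstar) = (Real.exp (2 * n * Rstar * Real.log 2)) ^ 2 := by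
    rw [Real.rpow_def_of_pos (by norm_num), ← Real.exp_nat_mul]
    congr 1
    push_cast
    ring
  rw [e, abs_le]
  have A := one_side hn _ γ₂ hγ s sh hs hsh hsum hsumh hc T Th hT hTh h1 h2
  have B := one_side hn _ γ₂ hγ sh s hsh hs hsumh hsum hc' Th T hTh hT h2 h1
  constructor <;> linarith
end

section
/- Fix D* ∈ [0.005, 0.995] and ε ∈ (0, D*), and set f_n = (D* − ε)/(2n). Then: sup{ 𝐑_rc(λ, D*) − 𝐑_wf(λ, D*) : λ ∈ ℝ₊ⁿ, Σᵢ λᵢ = n } ≤ ε + sup{ 𝐑_rc(λ, D) − 𝐑_wf(λ, D) : λ ∈ ℝ₊ⁿ, Σᵢ λᵢ = n, D ∈ [D* − ε, D*], minᵢ |λᵢ − t_wf(λ, D)| ≥ ε f_n }, where t_wf(λ, D) denotes the water level t > 0 with D_wf(λ, t) = D. -/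
open Real

/-- Waterfilling distortion `D_wf(λ, t) = (1/n) Σᵢ min{λᵢ, t}`. -/
noncomputable def Dwf {n : ℕ} (lam : Fin n → ℝ) (t : ℝ) : ℝ :=
  (1 / (n : ℝ)) * ∑ i, min (lam i) t

/-- Waterfilling rate `R_wf(λ, t) = (1/(2n)) Σᵢ max{0, log₂(λᵢ/t)}`. -/
noncomputable def Rwf {n : ℕ} (lam : Fin n → ℝ) (t : ℝ) : ℝ :=
  (1 / (2 * (n : ℝ))) * ∑ i, max 0 (Real.logb 2 (lam i / t))

/-- Random-coding distortion `D_rc(λ, T) = (1/n) Σᵢ λᵢ/(1 + λᵢ T)`. -/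
noncomputable def Drc {n : ℕ} (lam : Fin n → ℝ) (T : ℝ) : ℝ :=
  (1 / (n : ℝ)) * ∑ i, lam i / (1 + lam i * T)

/-- `t_wf(λ, D)`: the water level `t > 0` with `D_wf(λ, t) = D`. -/
noncomputable def twfD {n : ℕ} (lam : Fin n → ℝ) (D : ℝ) : ℝ :=
  Classical.epsilon fun t => 0 < t ∧ Dwf lam t = D

/-- `𝐑_wf(λ, D) = R_wf(λ, t_wf(λ, D))`. -/
noncomputable def RRwf {n : ℕ} (lam : Fin n → ℝ) (D : ℝ) : ℝ :=
  Rwf lam (twfD lam D)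

/-- `T > 0` solving `D_rc(λ, T) = D`. -/
noncomputable def TrcD {n : ℕ} (lam : Fin n → ℝ) (D : ℝ) : ℝ :=
  Classical.epsilon fun T => 0 < T ∧ Drc lam T = D

/-- `𝐑_rc(λ, D) = R_rc(λ, T)` where `T > 0` solves `D_rc(λ, T) = D`. -/
noncomputable def RRrc {n : ℕ} (lam : Fin n → ℝ) (D : ℝ) : ℝ :=
  Rrc lam (TrcD lam D)


lemma log2_pos : 0 < Real.log 2 := Real.log_pos (by norm_num)

lemma Dwf_exists {n : ℕ} (hn : 1 ≤ n) (lam : Fin n → ℝ) (h0 : ∀ i, 0 ≤ lam i)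
    (hs : ∑ i, lam i = (n : ℝ)) (D : ℝ) (hD0 : 0 < D) (hD1 : D < 1) :
    ∃ t, 0 < t ∧ Dwf lam t = D := by
  have hnpos : (0 : ℝ) < n := by exact_mod_cast hn
  have hcont : ContinuousOn (Dwf lam) (Set.Icc 0 (n : ℝ)) := by
    apply Continuous.continuousOn
    unfold Dwf
    fun_prop
  have e0 : Dwf lam 0 = 0 := by
    unfold Dwf
    rw [Finset.sum_eq_zero (fun i _ => min_eq_right (h0 i))]
    simp
  have e1 : Dwf lam n = 1 := by
    unfold Dwf
    have : ∀ i ∈ Finset.univ, min (lam i) (n : ℝ) = lam i := by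
      intro i hi
      apply min_eq_left
      rw [← hs]
      exact Finset.single_le_sum (fun j _ => h0 j) hi
    rw [Finset.sum_congr rfl this, hs]
    field_simp
  have := intermediate_value_Icc hnpos.le hcont
  rw [e0, e1] at this
  obtain ⟨t, ht, htD⟩ := this ⟨hD0.le, hD1.le⟩
  refine ⟨t, lt_of_le_of_ne ht.1 ?_, htD⟩
  rintro rfl
  rw [e0] at htD
  linarith

lemma Dwf_inj {n : ℕ} (hn : 1 ≤ n) (lam : Fin n → ℝ)
    (hs : ∑ i, lam i = (n : ℝ)) (s t : ℝ) (hst : s < t) (hD1 : Dwf lam s < 1) :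
    Dwf lam s < Dwf lam t := by
  have hnpos : (0 : ℝ) < n := by exact_mod_cast hn
  unfold Dwf at *
  apply mul_lt_mul_of_pos_left _ (by positivity)
  apply Finset.sum_lt_sum
  · intro i _
    exact min_le_min_left _ hst.le
  · by_contra! hcon
    have : ∀ i ∈ Finset.univ, min (lam i) s = lam i := by
      intro i hi
      have h := hcon i hi
      by_contra hne
      have h2 : s < lam i := by
        by_contra! h3
        exact hne (min_eq_left h3)
      rw [min_eq_right h2.le] at h
      have := lt_min h2 hst
      linarith
    rw [Finset.sum_congr rfl this, hs] at hD1
    field_simp at hD1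
    linarith

lemma Dwf_sub {n : ℕ} (hn : 1 ≤ n) (lam : Fin n → ℝ) (s t : ℝ) (hst : s ≤ t) :
    Dwf lam t - Dwf lam s ≤ t - s := by
  have hnpos : (0 : ℝ) < n := by exact_mod_cast hn
  unfold Dwf
  have : ∑ i, min (lam i) t ≤ ∑ i, (min (lam i) s + (t - s)) := by
    apply Finset.sum_le_sum
    intro i _
    rcases le_total (lam i) s with h | h
    · rw [min_eq_left h]
      linarith [min_le_left (lam i) t]
    · rw [min_eq_right h]
      linarith [min_le_right (lam i) t]
  rw [Finset.sum_add_distrib] at this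
  simp only [Finset.sum_const, Finset.card_univ, Fintype.card_fin, nsmul_eq_mul] at this
  rw [← mul_sub, one_div, inv_mul_le_iff₀ hnpos]
  linarith

lemma Dwf_le {n : ℕ} (hn : 1 ≤ n) (lam : Fin n → ℝ) (t : ℝ) : Dwf lam t ≤ t := by
  have hnpos : (0 : ℝ) < n := by exact_mod_cast hn
  unfold Dwf
  have : ∑ i, min (lam i) t ≤ ∑ i : Fin n, t :=
    Finset.sum_le_sum (fun i _ => min_le_right _ _)
  simp only [Finset.sum_const, Finset.card_univ, Fintype.card_fin, nsmul_eq_mul] at this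
  rwa [one_div, inv_mul_le_iff₀ hnpos]

lemma twfD_spec {n : ℕ} (hn : 1 ≤ n) (lam : Fin n → ℝ) (h0 : ∀ i, 0 ≤ lam i)
    (hs : ∑ i, lam i = (n : ℝ)) (D : ℝ) (hD0 : 0 < D) (hD1 : D < 1) :
    0 < twfD lam D ∧ Dwf lam (twfD lam D) = D :=
  Classical.epsilon_spec (p := fun t => 0 < t ∧ Dwf lam t = D)
    (Dwf_exists hn lam h0 hs D hD0 hD1)

lemma Drc_le {n : ℕ} (hn : 1 ≤ n) (lam : Fin n → ℝ) (h0 : ∀ i, 0 ≤ lam i) (T : ℝ) (hT : 0 < T) :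
    Drc lam T ≤ 1 / T := by
  have hnpos : (0 : ℝ) < n := by exact_mod_cast hn
  unfold Drc
  have : ∑ i, lam i / (1 + lam i * T) ≤ ∑ i : Fin n, 1 / T := by
    apply Finset.sum_le_sum
    intro i _
    have := mul_nonneg (h0 i) hT.le
    rw [div_le_div_iff₀ (by linarith) hT]
    linarith
  simp only [Finset.sum_const, Finset.card_univ, Fintype.card_fin, nsmul_eq_mul] at this
  rwa [one_div (n : ℝ), inv_mul_le_iff₀ hnpos]

lemma Drc_anti {n : ℕ} (lam : Fin n → ℝ) (h0 : ∀ i, 0 ≤ lam i) (S T : ℝ) (hS : 0 ≤ S)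
    (hST : S ≤ T) : Drc lam T ≤ Drc lam S := by
  unfold Drc
  apply mul_le_mul_of_nonneg_left _ (by positivity)
  apply Finset.sum_le_sum
  intro i _
  have h1 := mul_nonneg (h0 i) hS
  have h2 := mul_le_mul_of_nonneg_left hST (h0 i)
  exact div_le_div_of_nonneg_left (h0 i) (by linarith) (by linarith)

lemma TrcD_spec {n : ℕ} (hn : 1 ≤ n) (lam : Fin n → ℝ) (h0 : ∀ i, 0 ≤ lam i)
    (hs : ∑ i, lam i = (n : ℝ)) (D : ℝ) (hD0 : 0 < D) (hD1 : D < 1) :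
    0 < TrcD lam D ∧ Drc lam (TrcD lam D) = D := by
  apply Classical.epsilon_spec (p := fun t => 0 < t ∧ Drc lam t = D)
  have hnpos : (0 : ℝ) < n := by exact_mod_cast hn
  have hcont : ContinuousOn (Drc lam) (Set.Icc 0 (1 / D)) := by
    unfold Drc
    apply ContinuousOn.mul continuousOn_const
    apply continuousOn_finsetSum
    intro i _
    apply ContinuousOn.div continuousOn_const (by fun_prop)
    intro T hT
    have := mul_nonneg (h0 i) hT.1
    linarith
  have e0 : Drc lam 0 = 1 := by
    unfold Drc
    simp only [mul_zero, add_zero, div_one, hs]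
    field_simp
  have e1 := Drc_le hn lam h0 (1 / D) (by positivity)
  rw [one_div_one_div] at e1
  have := intermediate_value_Icc' (by positivity : (0 : ℝ) ≤ 1 / D) hcont
  rw [e0] at this
  obtain ⟨t, ht, htD⟩ := this ⟨e1, hD1.le⟩
  refine ⟨t, lt_of_le_of_ne ht.1 ?_, htD⟩
  rintro rfl
  rw [e0] at htD
  linarith

lemma TrcD_anti {n : ℕ} (hn : 1 ≤ n) (lam : Fin n → ℝ) (h0 : ∀ i, 0 ≤ lam i)
    (hs : ∑ i, lam i = (n : ℝ)) (D E : ℝ) (hD0 : 0 < D) (hE1 : E < 1) (hDE : D ≤ E) :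
    TrcD lam E ≤ TrcD lam D := by
  rcases hDE.eq_or_lt with rfl | h
  · exact le_rfl
  obtain ⟨a, b⟩ := TrcD_spec hn lam h0 hs D hD0 (by linarith)
  obtain ⟨c, d⟩ := TrcD_spec hn lam h0 hs E (by linarith) hE1
  by_contra! hc
  have := Drc_anti lam h0 _ _ a.le hc.le
  linarith

lemma RRrc_anti {n : ℕ} (hn : 1 ≤ n) (lam : Fin n → ℝ) (h0 : ∀ i, 0 ≤ lam i)
    (hs : ∑ i, lam i = (n : ℝ)) (D E : ℝ) (hD0 : 0 < D) (hE1 : E < 1) (hDE : D ≤ E) :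
    RRrc lam E ≤ RRrc lam D := by
  have h := TrcD_anti hn lam h0 hs D E hD0 hE1 hDE
  obtain ⟨c, d⟩ := TrcD_spec hn lam h0 hs E (by linarith) hE1
  unfold RRrc Rrc
  apply mul_le_mul_of_nonneg_left _ (by positivity)
  apply Finset.sum_le_sum
  intro i _
  have h1 := mul_nonneg (h0 i) c.le
  have h2 := mul_le_mul_of_nonneg_left h (h0 i)
  exact Real.logb_le_logb_of_le (by norm_num) (by linarith) (by linarith)

lemma logb_bound (x : ℝ) (hx : 0 < x) : Real.logb 2 x ≤ (x - 1) / Real.log 2 := by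
  unfold Real.logb
  have := log2_pos
  exact div_le_div_of_nonneg_right (Real.log_le_sub_one_of_pos hx) this.le

lemma RRrc_bound {n : ℕ} (hn : 1 ≤ n) (lam : Fin n → ℝ) (h0 : ∀ i, 0 ≤ lam i)
    (hs : ∑ i, lam i = (n : ℝ)) (D : ℝ) (hD0 : 0 < D) (hD1 : D < 1) :
    RRrc lam D ≤ (1 / D) / (2 * Real.log 2) := by
  have hnpos : (0 : ℝ) < n := by exact_mod_cast hn
  obtain ⟨c, d⟩ := TrcD_spec hn lam h0 hs D hD0 hD1
  have h1 := Drc_le hn lam h0 _ c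
  rw [d] at h1
  have hT : TrcD lam D ≤ 1 / D := by
    rw [le_div_iff₀ c] at h1
    rw [le_div_iff₀ hD0]
    linarith
  unfold RRrc Rrc
  have hl := log2_pos
  have : ∑ i, Real.logb 2 (1 + lam i * TrcD lam D) ≤ ∑ i, lam i * (TrcD lam D / Real.log 2) := by
    apply Finset.sum_le_sum
    intro i _
    have h1 := mul_nonneg (h0 i) c.le
    have := logb_bound (1 + lam i * TrcD lam D) (by linarith)
    calc _ ≤ _ := this
      _ = _ := by ring
  rw [← Finset.sum_mul, hs] at this
  calc _ ≤ 1 / (2 * (n : ℝ)) * (n * (TrcD lam D / Real.log 2)) :=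
        mul_le_mul_of_nonneg_left this (by positivity)
    _ = TrcD lam D / (2 * Real.log 2) := by field_simp
    _ ≤ _ := by gcongr

lemma Rwf_nonneg {n : ℕ} (lam : Fin n → ℝ) (t : ℝ) : 0 ≤ Rwf lam t := by
  unfold Rwf
  apply mul_nonneg (by positivity)
  exact Finset.sum_nonneg (fun i _ => le_max_left _ _)

lemma Rwf_sub {n : ℕ} (hn : 1 ≤ n) (lam : Fin n → ℝ) (h0 : ∀ i, 0 ≤ lam i)
    (s t : ℝ) (hs : 0 < s) (hst : s ≤ t) :
    Rwf lam s ≤ Rwf lam t + Real.logb 2 (t / s) / 2 := by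
  have hnpos : (0 : ℝ) < n := by exact_mod_cast hn
  have ht : 0 < t := by linarith
  have hpos : 0 ≤ Real.logb 2 (t / s) :=
    Real.logb_nonneg (by norm_num) (by rwa [le_div_iff₀ hs, one_mul])
  have : ∑ i, max 0 (Real.logb 2 (lam i / s)) ≤
      ∑ i, (max 0 (Real.logb 2 (lam i / t)) + Real.logb 2 (t / s)) := by
    apply Finset.sum_le_sum
    intro i _
    have hm1 := le_max_left 0 (Real.logb 2 (lam i / t))
    have hm2 := le_max_right 0 (Real.logb 2 (lam i / t))
    apply max_le
    · linarith
    · rcases (h0 i).eq_or_lt with h | h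
      · have h2 : Real.logb 2 (lam i / s) = 0 := by rw [← h]; simp
        linarith
      · have : lam i / s = (lam i / t) * (t / s) := by field_simp
        rw [this, Real.logb_mul (by positivity) (by positivity)]
        linarith
  rw [Finset.sum_add_distrib] at this
  simp only [Finset.sum_const, Finset.card_univ, Fintype.card_fin, nsmul_eq_mul] at this
  unfold Rwf
  calc _ ≤ 1 / (2 * (n : ℝ)) * (∑ i, max 0 (Real.logb 2 (lam i / t)) + n * Real.logb 2 (t / s)) :=
        mul_le_mul_of_nonneg_left this (by positivity)
    _ = _ := by field_simp

lemma exists_avoid {n : ℕ} (lam : Fin n → ℝ) (a b δ : ℝ) (hδ : 0 ≤ δ)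
    (hab : 2 * n * δ < b - a) : ∃ t ∈ Set.Icc a b, ∀ i, δ ≤ |lam i - t| := by
  by_contra! hcon
  have hsub : Set.Icc a b ⊆ ⋃ i, Set.Ioo (lam i - δ) (lam i + δ) := by
    intro t ht
    obtain ⟨i, hi⟩ := hcon t ht
    rw [abs_lt] at hi
    exact Set.mem_iUnion.2 ⟨i, by linarith [hi.2], by linarith [hi.1]⟩
  have h1 := (MeasureTheory.measure_mono (μ := MeasureTheory.volume) hsub).trans
    (MeasureTheory.measure_iUnion_fintype_le _ _)
  simp only [Real.volume_Icc, Real.volume_Ioo] at h1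
  rw [← ENNReal.ofReal_sum_of_nonneg (fun i _ => by linarith)] at h1
  have h2 : ∑ i : Fin n, (lam i + δ - (lam i - δ)) = 2 * n * δ := by
    rw [Finset.sum_congr rfl (fun i _ => (by ring : lam i + δ - (lam i - δ) = 2 * δ))]
    simp only [Finset.sum_const, Finset.card_univ, Fintype.card_fin, nsmul_eq_mul]
    ring
  rw [h2, ENNReal.ofReal_le_ofReal_iff (by positivity)] at h1
  linarith

lemma key {n : ℕ} (hn : 1 ≤ n) (Dstar ε : ℝ)
    (hD : Dstar ∈ Set.Icc (0.005 : ℝ) 0.995) (hε : ε ∈ Set.Ioo (0 : ℝ) Dstar)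
    (lam : Fin n → ℝ) (h0 : ∀ i, 0 ≤ lam i) (hs : ∑ i, lam i = (n : ℝ)) :
    ∃ D ∈ Set.Icc (Dstar - ε) Dstar,
      (∀ i, ε * ((Dstar - ε) / (2 * (n : ℝ))) ≤ |lam i - twfD lam D|) ∧
      RRrc lam Dstar - RRwf lam Dstar ≤ ε + (RRrc lam D - RRwf lam D) := by
  have hnpos : (0 : ℝ) < n := by exact_mod_cast hn
  obtain ⟨hD0, hD1⟩ := hD
  obtain ⟨he0, he1⟩ := hε
  norm_num at hD0 hD1
  obtain ⟨ht0, htD⟩ := twfD_spec hn lam h0 hs Dstar (by linarith) (by linarith)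
  set ts := twfD lam Dstar with hts
  have hg : 0 < Dstar - ε := by linarith
  have hp : 0 < ε * (Dstar - ε) := by positivity
  obtain ⟨t, ⟨hta, htb⟩, hti⟩ := exists_avoid lam (ts - 1.005 * (ε * (Dstar - ε))) ts
    (ε * ((Dstar - ε) / (2 * (n : ℝ)))) (by positivity) (by
      have : 2 * (n : ℝ) * (ε * ((Dstar - ε) / (2 * (n : ℝ)))) = ε * (Dstar - ε) := by field_simp
      rw [this]
      linarith)
  have hL : 1.005 * (ε * (Dstar - ε)) ≤ ε := by nlinarith
  have hsub := Dwf_sub hn lam t ts htb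
  have hle := Dwf_le hn lam t
  have hlow : Dstar - ε ≤ Dwf lam t := by linarith
  have htpos : 0 < t := by linarith
  have hup : Dwf lam t ≤ Dstar := by
    rw [← htD]
    unfold Dwf
    apply mul_le_mul_of_nonneg_left _ (by positivity)
    exact Finset.sum_le_sum (fun i _ => min_le_min_left _ htb)
  have htw : twfD lam (Dwf lam t) = t := by
    obtain ⟨hu0, huD⟩ := twfD_spec hn lam h0 hs (Dwf lam t) (by linarith) (by linarith)
    rcases lt_trichotomy (twfD lam (Dwf lam t)) t with h | h | h
    · have := Dwf_inj hn lam hs _ _ h (by linarith)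
      linarith
    · exact h
    · have := Dwf_inj hn lam hs _ _ h (by linarith)
      linarith
  refine ⟨Dwf lam t, ⟨hlow, hup⟩, by rwa [htw], ?_⟩
  have h1 := RRrc_anti hn lam h0 hs _ _ (by linarith) (by linarith) hup
  have h2 := Rwf_sub hn lam h0 t ts htpos htb
  have h3 := logb_bound (ts / t) (by positivity)
  have h4 : ts / t - 1 ≤ 1.005 * ε := by
    rw [sub_le_iff_le_add, div_le_iff₀ htpos]
    have : ε * (Dstar - ε) ≤ ε * t := mul_le_mul_of_nonneg_left (by linarith) he0.le
    linarith
  have h5 : (ts / t - 1) / Real.log 2 ≤ 2 * ε := by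
    rw [div_le_iff₀ log2_pos]
    have := Real.log_two_gt_d9
    nlinarith
  unfold RRwf
  rw [htw, ← hts]
  linarith

/-- reduction to spectra whose eigenvalues are bounded away from the
water level (Claim "interior"), with `f_n = (D* - ε)/(2n)`. -/
theorem stmt_13 (n : ℕ) (hn : 1 ≤ n) (Dstar ε : ℝ)
    (hD : Dstar ∈ Set.Icc (0.005 : ℝ) 0.995) (hε : ε ∈ Set.Ioo (0 : ℝ) Dstar) :
    sSup {x : ℝ | ∃ lam : Fin n → ℝ, (∀ i, 0 ≤ lam i) ∧ (∑ i, lam i) = (n : ℝ) ∧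
          x = RRrc lam Dstar - RRwf lam Dstar}
      ≤ ε + sSup {x : ℝ | ∃ (lam : Fin n → ℝ) (D : ℝ),
          (∀ i, 0 ≤ lam i) ∧ (∑ i, lam i) = (n : ℝ) ∧
          D ∈ Set.Icc (Dstar - ε) Dstar ∧
          (∀ i, ε * ((Dstar - ε) / (2 * (n : ℝ))) ≤ |lam i - twfD lam D|) ∧
          x = RRrc lam D - RRwf lam D} := by
  apply csSup_le
  · refine ⟨_, fun _ => 1, fun _ => zero_le_one, ?_, rfl⟩
    simp
  rintro x ⟨lam, h0, hs, rfl⟩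
  obtain ⟨D, hDm, hi, hk⟩ := key hn Dstar ε hD hε lam h0 hs
  refine hk.trans ?_
  gcongr
  apply le_csSup
  · refine ⟨(1 / (Dstar - ε)) / (2 * Real.log 2), ?_⟩
    rintro y ⟨mu, E, m0, ms, hE, -, rfl⟩
    have hg : 0 < Dstar - ε := by linarith [hε.2]
    have hE1 : E < 1 := by
      have h1 := hD.2
      norm_num at h1
      linarith [hE.2]
    have hb := RRrc_bound hn mu m0 ms E (by linarith [hE.1]) hE1
    have hw : 0 ≤ RRwf mu E := Rwf_nonneg _ _
    have hl := log2_pos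
    have : (1 / E) / (2 * Real.log 2) ≤ (1 / (Dstar - ε)) / (2 * Real.log 2) := by
      gcongr
      exact hE.1
    linarith
  · exact ⟨lam, D, h0, hs, hDm, hi, rfl⟩
end
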